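/- arXiv:2408.01226 — 2 statements merged into one kernel-verified Lean document; each statement's English description precedes it below -/
import Mathlib

section
/- Every series-parallel graph G admits a canonical decomposition: if G is an S-graph then there is a unique sequence G_1,...,G_k (k ≥ 2) of P-graphs with G = G_1 ∘ ... ∘ G_k; if G is a P-graph then either G is a single edge or there is a unique nonempty finite set {G_1,...,G_k} (k ≥ 2) of single edges and S-graphs with G = G_1 ∥ ... ∥ G_k. -/
/-- A graph of sort `{1,2}`: binary labeled edges and two distinguished
sources. -/
structure G2 (L : Type) where
  V : Type
  E : Type
  att : E → V × V
  lab : E → L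
  s1 : V
  s2 : V

/-- An isomorphism of graphs of sort `{1,2}`. -/
structure GIso {L : Type} (G H : G2 L) where
  vEquiv : G.V ≃ H.V
  eEquiv : G.E ≃ H.E
  att_comm : ∀ e, H.att (eEquiv e) = (vEquiv (G.att e).1, vEquiv (G.att e).2)
  lab_comm : ∀ e, H.lab (eEquiv e) = G.lab e
  s1_comm : vEquiv G.s1 = H.s1
  s2_comm : vEquiv G.s2 = H.s2

/-- The single-edge graph `b₁,₂`. -/
def edgeG {L : Type} (b : L) : G2 L where
  V := Bool
  E := Unit
  att := fun _ => (false, true)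
  lab := fun _ => b
  s1 := false
  s2 := true

/-- The reversed single-edge graph `b₂,₁`. -/
def edgeRG {L : Type} (b : L) : G2 L where
  V := Bool
  E := Unit
  att := fun _ => (true, false)
  lab := fun _ => b
  s1 := false
  s2 := true

/-- Gluing relation for parallel composition: identify the two 1-sources and
the two 2-sources. -/
def parRel {L : Type} (G H : G2 L) : (G.V ⊕ H.V) → (G.V ⊕ H.V) → Prop :=
  fun a b => (a = Sum.inl G.s1 ∧ b = Sum.inr H.s1) ∨
             (a = Sum.inl G.s2 ∧ b = Sum.inr H.s2)

/-- Parallel composition of graphs of sort `{1,2}`. -/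
def parG {L : Type} (G H : G2 L) : G2 L where
  V := Quot (parRel G H)
  E := G.E ⊕ H.E
  att := fun e =>
    match e with
    | Sum.inl e => (Quot.mk _ (Sum.inl (G.att e).1), Quot.mk _ (Sum.inl (G.att e).2))
    | Sum.inr e => (Quot.mk _ (Sum.inr (H.att e).1), Quot.mk _ (Sum.inr (H.att e).2))
  lab := Sum.elim G.lab H.lab
  s1 := Quot.mk _ (Sum.inl G.s1)
  s2 := Quot.mk _ (Sum.inl G.s2)

/-- Gluing relation for serial composition: identify the 2-source of the first
graph with the 1-source of the second. -/
def serRel {L : Type} (G H : G2 L) : (G.V ⊕ H.V) → (G.V ⊕ H.V) → Prop :=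
  fun a b => a = Sum.inl G.s2 ∧ b = Sum.inr H.s1

/-- Serial composition of graphs of sort `{1,2}`. -/
def serG {L : Type} (G H : G2 L) : G2 L where
  V := Quot (serRel G H)
  E := G.E ⊕ H.E
  att := fun e =>
    match e with
    | Sum.inl e => (Quot.mk _ (Sum.inl (G.att e).1), Quot.mk _ (Sum.inl (G.att e).2))
    | Sum.inr e => (Quot.mk _ (Sum.inr (H.att e).1), Quot.mk _ (Sum.inr (H.att e).2))
  lab := Sum.elim G.lab H.lab
  s1 := Quot.mk _ (Sum.inl G.s1)
  s2 := Quot.mk _ (Sum.inr H.s2)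

/-- Series-parallel graphs: generated from single edges `b₁,₂` by parallel and
serial composition, closed under isomorphism. -/
inductive IsSP {L : Type} : G2 L → Prop
  | edge (b : L) : IsSP (edgeG b)
  | par {G H : G2 L} : IsSP G → IsSP H → IsSP (parG G H)
  | ser {G H : G2 L} : IsSP G → IsSP H → IsSP (serG G H)
  | iso {G H : G2 L} : IsSP G → GIso G H → IsSP H

/-- Disoriented series-parallel graphs: also generated from reversed edges
`b₂,₁`. -/
inductive IsDSP {L : Type} : G2 L → Prop
  | edge (b : L) : IsDSP (edgeG b)
  | redge (b : L) : IsDSP (edgeRG b)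
  | par {G H : G2 L} : IsDSP G → IsDSP H → IsDSP (parG G H)
  | ser {G H : G2 L} : IsDSP G → IsDSP H → IsDSP (serG G H)
  | iso {G H : G2 L} : IsDSP G → GIso G H → IsDSP H

/-- `G` is a single-edge graph (up to isomorphism). -/
def IsSingleEdge {L : Type} (G : G2 L) : Prop :=
  ∃ b : L, Nonempty (GIso G (edgeG b))

/-- `G` is a P-graph: a series-parallel graph that is ∘-atomic. -/
def PGraph {L : Type} (G : G2 L) : Prop :=
  IsSP G ∧ ∀ G₁ G₂ : G2 L, IsSP G₁ → IsSP G₂ → ¬ Nonempty (GIso G (serG G₁ G₂))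

/-- Left-associated serial composition of a head graph with a list. -/
def serFold {L : Type} (g : G2 L) : List (G2 L) → G2 L
  | [] => g
  | h :: t => serFold (serG g h) t

/-- Left-associated parallel composition of a head graph with a list. -/
def parFold {L : Type} (g : G2 L) : List (G2 L) → G2 L
  | [] => g
  | h :: t => parFold (parG g h) t

namespace SPaux

variable {L : Type}

/-- Directed reachability. -/
def Reach (G : G2 L) : G.V → G.V → Prop :=
  Relation.ReflTransGen (fun a b => ∃ e, G.att e = (a, b))

/-- Embeddings of graphs, sources are not required to be preserved. -/
structure GEmb (A G : G2 L) where
  fv : A.V → G.V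
  fe : A.E → G.E
  vinj : Function.Injective fv
  einj : Function.Injective fe
  att_comm : ∀ e, G.att (fe e) = (fv (A.att e).1, fv (A.att e).2)
  lab_comm : ∀ e, G.lab (fe e) = A.lab e

theorem GEmb.reach {A G : G2 L} (f : GEmb A G) {a b : A.V} (h : Reach A a b) :
    Reach G (f.fv a) (f.fv b) := by
  induction h with
  | refl => exact Relation.ReflTransGen.refl
  | tail _ h ih =>
    obtain ⟨e, he⟩ := h
    exact ih.tail ⟨f.fe e, by rw [f.att_comm, he]⟩

def isoRefl (G : G2 L) : GIso G G :=
  ⟨Equiv.refl _, Equiv.refl _, fun _ => rfl, fun _ => rfl, rfl, rfl⟩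

def isoSymm {G H : G2 L} (f : GIso G H) : GIso H G where
  vEquiv := f.vEquiv.symm
  eEquiv := f.eEquiv.symm
  att_comm := fun e => by
    have := f.att_comm (f.eEquiv.symm e)
    rw [Equiv.apply_symm_apply] at this
    rw [this]; simp
  lab_comm := fun e => by
    have := f.lab_comm (f.eEquiv.symm e)
    rw [Equiv.apply_symm_apply] at this
    exact this.symm
  s1_comm := by rw [← f.s1_comm]; simp
  s2_comm := by rw [← f.s2_comm]; simp

def isoTrans {G H K : G2 L} (f : GIso G H) (g : GIso H K) : GIso G K where
  vEquiv := f.vEquiv.trans g.vEquiv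
  eEquiv := f.eEquiv.trans g.eEquiv
  att_comm := fun e => by simp [g.att_comm, f.att_comm]
  lab_comm := fun e => by simp [g.lab_comm, f.lab_comm]
  s1_comm := by simp [f.s1_comm, g.s1_comm]
  s2_comm := by simp [f.s2_comm, g.s2_comm]

def isoEmb {G H : G2 L} (f : GIso G H) : GEmb G H :=
  ⟨f.vEquiv, f.eEquiv, f.vEquiv.injective, f.eEquiv.injective, f.att_comm, f.lab_comm⟩

def GEmb.comp {A B C : G2 L} (g : GEmb B C) (f : GEmb A B) : GEmb A C :=
  ⟨g.fv ∘ f.fv, g.fe ∘ f.fe, g.vinj.comp f.vinj, g.einj.comp f.einj,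
    fun e => by simp [g.att_comm, f.att_comm], fun e => by simp [g.lab_comm, f.lab_comm]⟩

/-! ### Vertex maps into compositions -/

def pl (G H : G2 L) (x : G.V) : (parG G H).V := Quot.mk _ (Sum.inl x)
def pr (G H : G2 L) (x : H.V) : (parG G H).V := Quot.mk _ (Sum.inr x)
def sl (G H : G2 L) (x : G.V) : (serG G H).V := Quot.mk _ (Sum.inl x)
def sr (G H : G2 L) (x : H.V) : (serG G H).V := Quot.mk _ (Sum.inr x)

theorem p_s1 (G H : G2 L) : pl G H G.s1 = pr G H H.s1 := Quot.sound (Or.inl ⟨rfl, rfl⟩)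
theorem p_s2 (G H : G2 L) : pl G H G.s2 = pr G H H.s2 := Quot.sound (Or.inr ⟨rfl, rfl⟩)
theorem s_j (G H : G2 L) : sl G H G.s2 = sr G H H.s1 := Quot.sound ⟨rfl, rfl⟩

theorem p_cases {G H : G2 L} (v : (parG G H).V) : (∃ x, v = pl G H x) ∨ ∃ y, v = pr G H y := by
  rcases v with ⟨x | y⟩
  · exact Or.inl ⟨x, rfl⟩
  · exact Or.inr ⟨y, rfl⟩

theorem s_cases {G H : G2 L} (v : (serG G H).V) : (∃ x, v = sl G H x) ∨ ∃ y, v = sr G H y := by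
  rcases v with ⟨x | y⟩
  · exact Or.inl ⟨x, rfl⟩
  · exact Or.inr ⟨y, rfl⟩

open Classical in
noncomputable def retL (G H : G2 L) (hH : H.s1 ≠ H.s2) : (parG G H).V → Option G.V :=
  Quot.lift (Sum.elim some
    (fun y => if y = H.s1 then some G.s1 else if y = H.s2 then some G.s2 else none)) (by
    rintro a b (⟨rfl, rfl⟩ | ⟨rfl, rfl⟩)
    · simp
    · simp [hH.symm])

open Classical in
noncomputable def retR (G H : G2 L) (hG : G.s1 ≠ G.s2) : (parG G H).V → Option H.V :=
  Quot.lift (Sum.elim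
    (fun y => if y = G.s1 then some H.s1 else if y = G.s2 then some H.s2 else none) some) (by
    rintro a b (⟨rfl, rfl⟩ | ⟨rfl, rfl⟩)
    · simp
    · simp [hG.symm])

open Classical in
noncomputable def sretL (G H : G2 L) : (serG G H).V → Option G.V :=
  Quot.lift (Sum.elim some (fun y => if y = H.s1 then some G.s2 else none)) (by
    rintro a b ⟨rfl, rfl⟩
    simp)

open Classical in
noncomputable def sretR (G H : G2 L) : (serG G H).V → Option H.V :=
  Quot.lift (Sum.elim (fun y => if y = G.s2 then some H.s1 else none) some) (by
    rintro a b ⟨rfl, rfl⟩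
    simp)

theorem pl_inj {G H : G2 L} (hH : H.s1 ≠ H.s2) : Function.Injective (pl G H) := by
  intro x y h
  exact Option.some.inj (congrArg (retL G H hH) h)

theorem pr_inj {G H : G2 L} (hG : G.s1 ≠ G.s2) : Function.Injective (pr G H) := by
  intro x y h
  exact Option.some.inj (congrArg (retR G H hG) h)

theorem sl_inj {G H : G2 L} : Function.Injective (sl G H) := by
  intro x y h
  exact Option.some.inj (congrArg (sretL G H) h)

theorem sr_inj {G H : G2 L} : Function.Injective (sr G H) := by
  intro x y h
  exact Option.some.inj (congrArg (sretR G H) h)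

theorem pl_eq_pr {G H : G2 L} (hH : H.s1 ≠ H.s2) {x : G.V} {y : H.V} (h : pl G H x = pr G H y) :
    (x = G.s1 ∧ y = H.s1) ∨ (x = G.s2 ∧ y = H.s2) := by
  classical
  have h2 : some x = if y = H.s1 then some G.s1 else if y = H.s2 then some G.s2 else none :=
    congrArg (retL G H hH) h
  split_ifs at h2 with h3 h4
  · exact Or.inl ⟨Option.some.inj h2, h3⟩
  · exact Or.inr ⟨Option.some.inj h2, h4⟩

theorem sl_eq_sr {G H : G2 L} {x : G.V} {y : H.V} (h : sl G H x = sr G H y) :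
    x = G.s2 ∧ y = H.s1 := by
  classical
  have h2 : some x = if y = H.s1 then some G.s2 else none := congrArg (sretL G H) h
  split_ifs at h2 with h3
  exact ⟨Option.some.inj h2, h3⟩

def embPl (G H : G2 L) (hH : H.s1 ≠ H.s2) : GEmb G (parG G H) :=
  ⟨pl G H, Sum.inl, pl_inj hH, Sum.inl_injective, fun _ => rfl, fun _ => rfl⟩
def embPr (G H : G2 L) (hG : G.s1 ≠ G.s2) : GEmb H (parG G H) :=
  ⟨pr G H, Sum.inr, pr_inj hG, Sum.inr_injective, fun _ => rfl, fun _ => rfl⟩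
def embSl (G H : G2 L) : GEmb G (serG G H) :=
  ⟨sl G H, Sum.inl, sl_inj, Sum.inl_injective, fun _ => rfl, fun _ => rfl⟩
def embSr (G H : G2 L) : GEmb H (serG G H) :=
  ⟨sr G H, Sum.inr, sr_inj, Sum.inr_injective, fun _ => rfl, fun _ => rfl⟩

/-! ### Basic facts on series-parallel graphs -/

structure Good (G : G2 L) : Prop where
  ne : G.s1 ≠ G.s2
  r1 : ∀ v, Reach G G.s1 v
  r2 : ∀ v, Reach G v G.s2
  hd : ∀ e, (G.att e).2 ≠ G.s1
  tl : ∀ e, (G.att e).1 ≠ G.s2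

theorem good_iso {G H : G2 L} (f : GIso G H) (h : Good G) : Good H where
  ne := by
    rw [← f.s1_comm, ← f.s2_comm]
    exact fun h' => h.ne (f.vEquiv.injective h')
  r1 := fun v => by
    have := (isoEmb f).reach (h.r1 (f.vEquiv.symm v))
    simpa [isoEmb, f.s1_comm] using this
  r2 := fun v => by
    have := (isoEmb f).reach (h.r2 (f.vEquiv.symm v))
    simpa [isoEmb, f.s2_comm] using this
  hd := fun e => by
    obtain ⟨e, rfl⟩ := f.eEquiv.surjective e
    rw [f.att_comm, ← f.s1_comm]
    exact fun h' => h.hd e (f.vEquiv.injective h')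
  tl := fun e => by
    obtain ⟨e, rfl⟩ := f.eEquiv.surjective e
    rw [f.att_comm, ← f.s2_comm]
    exact fun h' => h.tl e (f.vEquiv.injective h')

theorem good_edge (b : L) : Good (edgeG b) where
  ne := by simp [edgeG]
  r1 := by
    rintro (_ | _)
    · exact Relation.ReflTransGen.refl
    · exact Relation.ReflTransGen.single ⟨(), rfl⟩
  r2 := by
    rintro (_ | _)
    · exact Relation.ReflTransGen.single ⟨(), rfl⟩
    · exact Relation.ReflTransGen.refl
  hd := by intro e; simp [edgeG]
  tl := by intro e; simp [edgeG]

theorem good_par {G H : G2 L} (hG : Good G) (hH : Good H) : Good (parG G H) where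
  ne := fun h => hG.ne (pl_inj hH.ne h)
  r1 := fun v => by
    rcases p_cases v with ⟨x, rfl⟩ | ⟨y, rfl⟩
    · exact (embPl G H hH.ne).reach (hG.r1 x)
    · have := (embPr G H hG.ne).reach (hH.r1 y)
      change Reach _ (pr G H _) _ at this
      rw [← p_s1] at this
      exact this
  r2 := fun v => by
    rcases p_cases v with ⟨x, rfl⟩ | ⟨y, rfl⟩
    · exact (embPl G H hH.ne).reach (hG.r2 x)
    · have := (embPr G H hG.ne).reach (hH.r2 y)
      change Reach _ _ (pr G H _) at this
      rw [← p_s2] at this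
      exact this
  hd := by
    rintro (e | e) h
    · exact hG.hd e (pl_inj hH.ne h)
    · have h' : pr G H (H.att e).2 = pl G H G.s1 := h
      rw [p_s1] at h'
      exact hH.hd e (pr_inj hG.ne h')
  tl := by
    rintro (e | e) h
    · exact hG.tl e (pl_inj hH.ne h)
    · have h' : pr G H (H.att e).1 = pl G H G.s2 := h
      rw [p_s2] at h'
      exact hH.tl e (pr_inj hG.ne h')

theorem good_ser {G H : G2 L} (hG : Good G) (hH : Good H) : Good (serG G H) where
  ne := fun h => hG.ne (sl_eq_sr (G := G) (H := H) h).1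
  r1 := fun v => by
    rcases s_cases v with ⟨x, rfl⟩ | ⟨y, rfl⟩
    · exact (embSl G H).reach (hG.r1 x)
    · have h1 := (embSr G H).reach (hH.r1 y)
      change Reach _ (sr G H _) _ at h1
      rw [← s_j] at h1
      exact ((embSl G H).reach (hG.r1 G.s2)).trans h1
  r2 := fun v => by
    rcases s_cases v with ⟨x, rfl⟩ | ⟨y, rfl⟩
    · have h1 := (embSl G H).reach (hG.r2 x)
      change Reach _ _ (sl G H _) at h1
      rw [s_j] at h1
      exact h1.trans ((embSr G H).reach (hH.r2 H.s1))
    · exact (embSr G H).reach (hH.r2 y)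
  hd := by
    rintro (e | e) h
    · exact hG.hd e (sl_inj (H := H) h)
    · exact hG.ne (sl_eq_sr (G := G) (H := H) h.symm).1
  tl := by
    rintro (e | e) h
    · exact hH.ne (sl_eq_sr (G := G) (H := H) h).2.symm
    · exact hH.tl e (sr_inj (G := G) h)

theorem good_sp {G : G2 L} (h : IsSP G) : Good G := by
  induction h with
  | edge b => exact good_edge b
  | par _ _ h1 h2 => exact good_par h1 h2
  | ser _ _ h1 h2 => exact good_ser h1 h2
  | iso _ f h => exact good_iso f h

theorem Good.incident {G : G2 L} (h : Good G) (v : G.V) (hv : v ≠ G.s1) :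
    ∃ e, (G.att e).2 = v := by
  rcases Relation.ReflTransGen.cases_tail (h.r1 v) with h1 | ⟨c, _, e, he⟩
  · exact absurd h1 hv
  · exact ⟨e, by rw [he]⟩

/-- Two embeddings with the same edge image and sources give isomorphic graphs. -/
theorem iso_of_emb {A B G : G2 L} (f : GEmb A G) (g : GEmb B G) (hA : Good A) (hB : Good B)
    (h1 : f.fv A.s1 = g.fv B.s1) (h2 : f.fv A.s2 = g.fv B.s2)
    (hab : ∀ e, ∃ e', g.fe e' = f.fe e) (hba : ∀ e, ∃ e', f.fe e' = g.fe e) :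
    Nonempty (GIso A B) := by
  have vab : ∀ v, ∃ v', g.fv v' = f.fv v := by
    intro v
    by_cases hv : v = A.s1
    · exact ⟨B.s1, by rw [hv, h1]⟩
    · obtain ⟨e, rfl⟩ := hA.incident v hv
      obtain ⟨e', he'⟩ := hab e
      have h3 := f.att_comm e
      rw [← he', g.att_comm] at h3
      exact ⟨_, congrArg Prod.snd h3⟩
  have vba : ∀ v, ∃ v', f.fv v' = g.fv v := by
    intro v
    by_cases hv : v = B.s1
    · exact ⟨A.s1, by rw [hv, h1]⟩
    · obtain ⟨e, rfl⟩ := hB.incident v hv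
      obtain ⟨e', he'⟩ := hba e
      have h3 := g.att_comm e
      rw [← he', f.att_comm] at h3
      exact ⟨_, congrArg Prod.snd h3⟩
  choose ve hve using vab
  choose vi hvi using vba
  choose ee hee using hab
  choose ei hei using hba
  refine ⟨⟨⟨ve, vi, fun x => f.vinj (by rw [hvi, hve]), fun x => g.vinj (by rw [hve, hvi])⟩,
    ⟨ee, ei, fun x => f.einj (by rw [hei, hee]), fun x => g.einj (by rw [hee, hei])⟩,
    ?_, ?_, ?_, ?_⟩⟩
  · intro e
    have h3 := f.att_comm e
    rw [← hee, g.att_comm, ← hve, ← hve] at h3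
    exact Prod.ext (g.vinj (congrArg Prod.fst h3)) (g.vinj (congrArg Prod.snd h3))
  · intro e
    change B.lab (ee e) = A.lab e
    rw [← g.lab_comm, hee, f.lab_comm]
  · exact g.vinj (by rw [← h1]; exact hve _)
  · exact g.vinj (by rw [← h2]; exact hve _)

/-! ### Cut vertices -/

def Cut (G : G2 L) (v : G.V) : Prop :=
  v ≠ G.s1 ∧ v ≠ G.s2 ∧ ∀ e, Reach G (G.att e).2 v ∨ Reach G v (G.att e).1

theorem reach_closed {G : G2 L} (S : G.V → Prop)
    (hS : ∀ e, S (G.att e).1 → S (G.att e).2) {a b : G.V} (h : Reach G a b) (ha : S a) : S b := by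
  induction h with
  | refl => exact ha
  | tail _ h ih =>
    obtain ⟨e, he⟩ := h
    have := hS e
    rw [he] at this
    exact this ih

theorem cut_iso {G H : G2 L} (f : GIso G H) {v : G.V} (h : Cut G v) : Cut H (f.vEquiv v) := by
  refine ⟨?_, ?_, ?_⟩
  · rw [← f.s1_comm]; exact fun h' => h.1 (f.vEquiv.injective h')
  · rw [← f.s2_comm]; exact fun h' => h.2.1 (f.vEquiv.injective h')
  · intro e
    obtain ⟨e, rfl⟩ := f.eEquiv.surjective e
    rw [f.att_comm]
    rcases h.2.2 e with h' | h'
    · exact Or.inl ((isoEmb f).reach h')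
    · exact Or.inr ((isoEmb f).reach h')

theorem cut_joint {G H : G2 L} (hG : Good G) (hH : Good H) : Cut (serG G H) (sl G H G.s2) := by
  refine ⟨fun h => hG.ne (sl_inj h).symm, fun h => hH.ne (sl_eq_sr h).2.symm, ?_⟩
  rintro (e | e)
  · exact Or.inl ((embSl G H).reach (hG.r2 _))
  · right
    rw [s_j]
    exact (embSr G H).reach (hH.r1 _)

theorem Good.edge_ex {G : G2 L} (h : Good G) : ∃ e : G.E, True := by
  obtain ⟨e, _⟩ := h.incident G.s2 h.ne.symm
  exact ⟨e, trivial⟩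

/-- the set of left vertices other than the first source is closed under successors -/
theorem par_closed_l {G H : G2 L} (hG : Good G) (hH : Good H) (e : (parG G H).E)
    (h : ∃ x, x ≠ G.s1 ∧ ((parG G H).att e).1 = pl G H x) :
    ∃ x, x ≠ G.s1 ∧ ((parG G H).att e).2 = pl G H x := by
  obtain ⟨x, hx, h⟩ := h
  rcases e with e | e
  · exact ⟨_, hG.hd e, rfl⟩
  · rcases pl_eq_pr hH.ne h.symm with ⟨h1, _⟩ | ⟨_, h1⟩
    · exact absurd h1 hx
    · exact absurd h1 (hH.tl e)

theorem par_closed_r {G H : G2 L} (hG : Good G) (hH : Good H) (e : (parG G H).E)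
    (h : ∃ x, x ≠ H.s1 ∧ ((parG G H).att e).1 = pr G H x) :
    ∃ x, x ≠ H.s1 ∧ ((parG G H).att e).2 = pr G H x := by
  obtain ⟨x, hx, h⟩ := h
  rcases e with e | e
  · rcases pl_eq_pr hH.ne h with ⟨_, h1⟩ | ⟨h1, _⟩
    · exact absurd h1 hx
    · exact absurd h1 (hG.tl e)
  · exact ⟨_, hH.hd e, rfl⟩

theorem par_not_cut {G H : G2 L} (hG : Good G) (hH : Good H) (v : (parG G H).V) :
    ¬ Cut (parG G H) v := by
  rintro ⟨h1, h2, h3⟩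
  rcases p_cases v with ⟨x, rfl⟩ | ⟨y, rfl⟩
  · have hx1 : x ≠ G.s1 := fun h => h1 (by rw [h]; rfl)
    have hx2 : x ≠ G.s2 := fun h => h2 (by rw [h]; rfl)
    obtain ⟨e, -⟩ := hH.edge_ex
    rcases h3 (Sum.inr e) with h | h
    · obtain ⟨z, hz, hzz⟩ := reach_closed (fun w => ∃ x, x ≠ H.s1 ∧ w = pr G H x) (par_closed_r hG hH) h ⟨_, hH.hd e, rfl⟩
      rcases pl_eq_pr hH.ne hzz with ⟨h, _⟩ | ⟨h, _⟩
      · exact hx1 h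
      · exact hx2 h
    · obtain ⟨z, hz, hzz⟩ := reach_closed (fun w => ∃ x, x ≠ G.s1 ∧ w = pl G H x) (par_closed_l hG hH) h ⟨_, hx1, rfl⟩
      rcases pl_eq_pr hH.ne hzz.symm with ⟨h, _⟩ | ⟨_, h⟩
      · exact hz h
      · exact hH.tl e h
  · have hx1 : y ≠ H.s1 := fun h => h1 (by rw [h, ← p_s1]; rfl)
    have hx2 : y ≠ H.s2 := fun h => h2 (by rw [h, ← p_s2]; rfl)
    obtain ⟨e, -⟩ := hG.edge_ex
    rcases h3 (Sum.inl e) with h | h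
    · obtain ⟨z, hz, hzz⟩ := reach_closed (fun w => ∃ x, x ≠ G.s1 ∧ w = pl G H x) (par_closed_l hG hH) h ⟨_, hG.hd e, rfl⟩
      rcases pl_eq_pr hH.ne hzz.symm with ⟨_, h⟩ | ⟨_, h⟩
      · exact hx1 h
      · exact hx2 h
    · obtain ⟨z, hz, hzz⟩ := reach_closed (fun w => ∃ x, x ≠ H.s1 ∧ w = pr G H x) (par_closed_r hG hH) h ⟨_, hx1, rfl⟩
      rcases pl_eq_pr hH.ne hzz with ⟨_, h⟩ | ⟨h, _⟩
      · exact hz h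
      · exact hG.tl e h

theorem edge_not_cut (b : L) (v : (edgeG b).V) : ¬ Cut (edgeG b) v := by
  rintro ⟨h1, h2, _⟩
  cases v
  · exact h1 rfl
  · exact h2 rfl

theorem sp_cases {G : G2 L} (h : IsSP G) : (∀ v, ¬ Cut G v) ∨
    ∃ A B, IsSP A ∧ IsSP B ∧ Nonempty (GIso G (serG A B)) := by
  induction h with
  | edge b => exact Or.inl (edge_not_cut b)
  | par h1 h2 _ _ => exact Or.inl (par_not_cut (good_sp h1) (good_sp h2))
  | ser h1 h2 _ _ => exact Or.inr ⟨_, _, h1, h2, ⟨isoRefl _⟩⟩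
  | iso _ f h =>
    rcases h with h | ⟨A, B, hA, hB, ⟨g⟩⟩
    · exact Or.inl fun v hv => h _ (cut_iso (isoSymm f) hv)
    · exact Or.inr ⟨A, B, hA, hB, ⟨isoTrans (isoSymm f) g⟩⟩

theorem pgraph_iff {G : G2 L} (h : IsSP G) : PGraph G ↔ ∀ v, ¬ Cut G v := by
  constructor
  · rintro ⟨_, h2⟩
    rcases sp_cases h with h3 | ⟨A, B, hA, hB, h3⟩
    · exact h3
    · exact absurd h3 (h2 A B hA hB)
  · intro h2
    refine ⟨h, ?_⟩
    rintro A B hA hB ⟨f⟩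
    exact h2 _ (cut_iso (isoSymm f) (cut_joint (good_sp hA) (good_sp hB)))

theorem pgraph_iso {G H : G2 L} (f : GIso G H) (h : PGraph G) : PGraph H := by
  have hs := h.1
  rw [pgraph_iff hs] at h
  rw [pgraph_iff (hs.iso f)]
  exact fun v hv => h _ (cut_iso (isoSymm f) hv)

/-! ### Cancellation for serial composition -/

theorem ser_closed_r {G H : G2 L} (hG : Good G) (hH : Good H) (e : (serG G H).E)
    (h : ∃ x, ((serG G H).att e).1 = sr G H x) :
    ∃ x, x ≠ H.s1 ∧ ((serG G H).att e).2 = sr G H x := by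
  obtain ⟨x, h⟩ := h
  rcases e with e | e
  · exact absurd (sl_eq_sr h).1 (hG.tl e)
  · exact ⟨_, hH.hd e, rfl⟩

theorem ser_reach_r {G H : G2 L} (hG : Good G) {a b : H.V}
    (h : Reach (serG G H) (sr G H a) (sr G H b)) : Reach H a b := by
  have := reach_closed (G := serG G H) (fun w => ∃ c, w = sr G H c ∧ Reach H a c) ?_ h
    ⟨a, rfl, Relation.ReflTransGen.refl⟩
  · obtain ⟨c, hc, hr⟩ := this
    rw [sr_inj hc]; exact hr
  · rintro e ⟨c, hc, hr⟩
    rcases e with e | e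
    · exact absurd (sl_eq_sr hc).1 (hG.tl e)
    · refine ⟨_, rfl, hr.tail ⟨e, ?_⟩⟩
      rw [← sr_inj (G := G) (H := H) hc]

theorem ser_cut_r {G H : G2 L} (hG : Good G) {y : H.V} (hy : y ≠ H.s1)
    (h : Cut (serG G H) (sr G H y)) : Cut H y := by
  refine ⟨hy, fun h' => h.2.1 (by rw [h']; rfl), fun e => ?_⟩
  rcases h.2.2 (Sum.inr e) with h | h
  · exact Or.inl (ser_reach_r hG h)
  · exact Or.inr (ser_reach_r hG h)

theorem ser_joint_reach {G H : G2 L} (hG : Good G) (hH : Good H) {x : G.V}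
    (h : Reach (serG G H) (sl G H G.s2) (sl G H x)) : x = G.s2 := by
  rw [s_j] at h
  obtain ⟨z, hz⟩ := reach_closed (fun w => ∃ x, w = sr G H x)
    (fun e he => (ser_closed_r hG hH e he).imp fun _ h => h.2) h ⟨_, rfl⟩
  exact (sl_eq_sr hz).1

theorem ser_edge_l {G H : G2 L} (hG : Good G) (hH : Good H) (e : (serG G H).E) :
    Reach (serG G H) ((serG G H).att e).2 (sl G H G.s2) ↔ ∃ e', e = Sum.inl e' := by
  constructor
  · intro h
    rcases e with e | e
    · exact ⟨e, rfl⟩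
    · obtain ⟨z, hz, hzz⟩ := reach_closed (fun w => ∃ x, x ≠ H.s1 ∧ w = sr G H x)
        (fun e he => ser_closed_r hG hH e (he.imp fun _ h => h.2)) h ⟨_, hH.hd e, rfl⟩
      exact absurd (sl_eq_sr hzz).2 hz
  · rintro ⟨e, rfl⟩
    exact (embSl G H).reach (hG.r2 _)

theorem joint_to_joint {A P B Q : G2 L} (hA : Good A) (hP : Good P) (hB : Good B) (hQ : Good Q)
    (cP : ∀ v, ¬ Cut P v) (cQ : ∀ v, ¬ Cut Q v) (f : GIso (serG A P) (serG B Q)) :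
    f.vEquiv (sl A P A.s2) = sl B Q B.s2 := by
  have key : ∀ {A P B Q : G2 L} (hA : Good A) (hP : Good P) (hB : Good B)
      (cQ : ∀ v, ¬ Cut Q v) (f : GIso (serG A P) (serG B Q)),
      ∃ x, f.vEquiv (sl A P A.s2) = sl B Q x := by
    intro A P B Q hA hP hB cQ f
    have hc := cut_iso f (cut_joint hA hP)
    rcases s_cases (f.vEquiv (sl A P A.s2)) with h | ⟨y, hy⟩
    · exact h
    · by_cases h : y = Q.s1
      · exact ⟨B.s2, by rw [hy, h, s_j]⟩
      · rw [hy] at hc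
        exact absurd (ser_cut_r hB h hc) (cQ y)
  obtain ⟨x, hx⟩ := key hA hP hB cQ f
  obtain ⟨z, hz⟩ := key hB hQ hA cP (isoSymm f)
  have h1 := (isoEmb f).reach ((embSl A P).reach (hA.r2 z))
  change Reach _ (f.vEquiv (sl A P z)) (f.vEquiv (sl A P A.s2)) at h1
  rw [← hz, hx] at h1
  have h2 : f.vEquiv ((isoSymm f).vEquiv (sl B Q B.s2)) = sl B Q B.s2 :=
    f.vEquiv.apply_symm_apply _
  rw [h2] at h1
  rw [hx, ser_joint_reach hB hQ h1]

theorem ser_cancel {A P B Q : G2 L} (hA : Good A) (hP : Good P) (hB : Good B) (hQ : Good Q)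
    (cP : ∀ v, ¬ Cut P v) (cQ : ∀ v, ¬ Cut Q v) (f : GIso (serG A P) (serG B Q)) :
    Nonempty (GIso A B) ∧ Nonempty (GIso P Q) := by
  have hj := joint_to_joint hA hP hB hQ cP cQ f
  have he : ∀ e, (∃ e', f.eEquiv e = Sum.inl e') ↔ ∃ e', e = Sum.inl e' := by
    intro e
    rw [← ser_edge_l hA hP, ← ser_edge_l hB hQ (f.eEquiv e), f.att_comm, ← hj]
    constructor
    · intro h
      have := (isoEmb (isoSymm f)).reach h
      simpa [isoEmb, isoSymm] using this
    · exact fun h => (isoEmb f).reach h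
  constructor
  · refine iso_of_emb ((isoEmb f).comp (embSl A P)) (embSl B Q) hA hB f.s1_comm hj ?_ ?_
    · intro e
      obtain ⟨e', h⟩ := (he (Sum.inl e)).2 ⟨e, rfl⟩
      exact ⟨e', h.symm⟩
    · intro e
      obtain ⟨e', h⟩ := f.eEquiv.surjective (Sum.inl e)
      obtain ⟨e'', rfl⟩ := (he e').1 ⟨e, h⟩
      exact ⟨e'', h⟩
  · refine iso_of_emb ((isoEmb f).comp (embSr A P)) (embSr B Q) hP hQ ?_ f.s2_comm ?_ ?_
    · change f.vEquiv (sr A P P.s1) = sr B Q Q.s1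
      rw [← s_j, hj, s_j]
    · intro e
      rcases h : f.eEquiv (Sum.inr e) with e' | e'
      · obtain ⟨_, h'⟩ := (he (Sum.inr e)).1 ⟨e', h⟩
        cases h'
      · exact ⟨e', h.symm⟩
    · intro e
      obtain ⟨e' | e', h⟩ := f.eEquiv.surjective (Sum.inr e)
      · obtain ⟨_, h'⟩ := (he (Sum.inl e')).2 ⟨e', rfl⟩
        rw [h] at h'
        cases h'
      · exact ⟨e', h⟩

/-! ### Associativity and congruence -/

def serAssoc (A X Y : G2 L) : GIso (serG A (serG X Y)) (serG (serG A X) Y) where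
  vEquiv :=
    { toFun := Quot.lift (Sum.elim (fun a => sl (serG A X) Y (sl A X a))
        (Quot.lift (Sum.elim (fun x => sl (serG A X) Y (sr A X x)) (fun y => sr (serG A X) Y y))
          (by rintro _ _ ⟨rfl, rfl⟩; exact s_j (serG A X) Y)))
        (by rintro _ _ ⟨rfl, rfl⟩; exact congrArg (sl (serG A X) Y) (s_j A X))
      invFun := Quot.lift (Sum.elim
        (Quot.lift (Sum.elim (fun a => sl A (serG X Y) a) (fun x => sr A (serG X Y) (sl X Y x)))
          (by rintro _ _ ⟨rfl, rfl⟩; exact s_j A (serG X Y)))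
        (fun y => sr A (serG X Y) (sr X Y y)))
        (by rintro _ _ ⟨rfl, rfl⟩; exact congrArg (sr A (serG X Y)) (s_j X Y))
      left_inv := by rintro ⟨a | ⟨⟨x | y⟩⟩⟩ <;> rfl
      right_inv := by rintro ⟨⟨⟨a | x⟩⟩ | y⟩ <;> rfl }
  eEquiv := (Equiv.sumAssoc _ _ _).symm
  att_comm := by rintro (a | x | y) <;> rfl
  lab_comm := by rintro (a | x | y) <;> rfl
  s1_comm := rfl
  s2_comm := rfl

def parAssoc (A X Y : G2 L) : GIso (parG A (parG X Y)) (parG (parG A X) Y) where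
  vEquiv :=
    { toFun := Quot.lift (Sum.elim (fun a => pl (parG A X) Y (pl A X a))
        (Quot.lift (Sum.elim (fun x => pl (parG A X) Y (pr A X x)) (fun y => pr (parG A X) Y y))
          (by
            rintro _ _ (⟨rfl, rfl⟩ | ⟨rfl, rfl⟩)
            · exact (congrArg (pl (parG A X) Y) (p_s1 A X)).symm.trans (p_s1 (parG A X) Y)
            · exact (congrArg (pl (parG A X) Y) (p_s2 A X)).symm.trans (p_s2 (parG A X) Y))))
        (by
          rintro _ _ (⟨rfl, rfl⟩ | ⟨rfl, rfl⟩)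
          · exact congrArg (pl (parG A X) Y) (p_s1 A X)
          · exact congrArg (pl (parG A X) Y) (p_s2 A X))
      invFun := Quot.lift (Sum.elim
        (Quot.lift (Sum.elim (fun a => pl A (parG X Y) a) (fun x => pr A (parG X Y) (pl X Y x)))
          (by
            rintro _ _ (⟨rfl, rfl⟩ | ⟨rfl, rfl⟩)
            · exact p_s1 A (parG X Y)
            · exact p_s2 A (parG X Y)))
        (fun y => pr A (parG X Y) (pr X Y y)))
        (by
          rintro _ _ (⟨rfl, rfl⟩ | ⟨rfl, rfl⟩)
          · exact (p_s1 A (parG X Y)).trans (congrArg (pr A (parG X Y)) (p_s1 X Y))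
          · exact (p_s2 A (parG X Y)).trans (congrArg (pr A (parG X Y)) (p_s2 X Y)))
      left_inv := by rintro ⟨a | ⟨⟨x | y⟩⟩⟩ <;> rfl
      right_inv := by rintro ⟨⟨⟨a | x⟩⟩ | y⟩ <;> rfl }
  eEquiv := (Equiv.sumAssoc _ _ _).symm
  att_comm := by rintro (a | x | y) <;> rfl
  lab_comm := by rintro (a | x | y) <;> rfl
  s1_comm := rfl
  s2_comm := rfl

def serMap {A A' B B' : G2 L} (f : GIso A A') (g : GIso B B') :
    (serG A B).V → (serG A' B').V :=
  Quot.lift (Sum.elim (fun a => sl A' B' (f.vEquiv a)) (fun b => sr A' B' (g.vEquiv b)))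
    (by
      rintro _ _ ⟨rfl, rfl⟩
      simp only [Sum.elim_inl, Sum.elim_inr, f.s2_comm, g.s1_comm]
      exact s_j A' B')

def parMap {A A' B B' : G2 L} (f : GIso A A') (g : GIso B B') :
    (parG A B).V → (parG A' B').V :=
  Quot.lift (Sum.elim (fun a => pl A' B' (f.vEquiv a)) (fun b => pr A' B' (g.vEquiv b)))
    (by
      rintro _ _ (⟨rfl, rfl⟩ | ⟨rfl, rfl⟩)
      · simp only [Sum.elim_inl, Sum.elim_inr, f.s1_comm, g.s1_comm]
        exact p_s1 A' B'
      · simp only [Sum.elim_inl, Sum.elim_inr, f.s2_comm, g.s2_comm]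
        exact p_s2 A' B')

def serCongr {A A' B B' : G2 L} (f : GIso A A') (g : GIso B B') :
    GIso (serG A B) (serG A' B') where
  vEquiv :=
    { toFun := serMap f g
      invFun := serMap (isoSymm f) (isoSymm g)
      left_inv := by
        rintro ⟨a | b⟩
        · exact congrArg (sl A B) (f.vEquiv.symm_apply_apply a)
        · exact congrArg (sr A B) (g.vEquiv.symm_apply_apply b)
      right_inv := by
        rintro ⟨a | b⟩
        · exact congrArg (sl A' B') (f.vEquiv.apply_symm_apply a)
        · exact congrArg (sr A' B') (g.vEquiv.apply_symm_apply b) }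
  eEquiv := Equiv.sumCongr f.eEquiv g.eEquiv
  att_comm := by
    rintro (e | e)
    · exact Prod.ext (congrArg (fun p : A'.V × A'.V => sl A' B' p.1) (f.att_comm e))
        (congrArg (fun p : A'.V × A'.V => sl A' B' p.2) (f.att_comm e))
    · exact Prod.ext (congrArg (fun p : B'.V × B'.V => sr A' B' p.1) (g.att_comm e))
        (congrArg (fun p : B'.V × B'.V => sr A' B' p.2) (g.att_comm e))
  lab_comm := by
    rintro (e | e)
    · exact f.lab_comm e
    · exact g.lab_comm e
  s1_comm := congrArg (sl A' B') f.s1_comm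
  s2_comm := congrArg (sr A' B') g.s2_comm

def parCongr {A A' B B' : G2 L} (f : GIso A A') (g : GIso B B') :
    GIso (parG A B) (parG A' B') where
  vEquiv :=
    { toFun := parMap f g
      invFun := parMap (isoSymm f) (isoSymm g)
      left_inv := by
        rintro ⟨a | b⟩
        · exact congrArg (pl A B) (f.vEquiv.symm_apply_apply a)
        · exact congrArg (pr A B) (g.vEquiv.symm_apply_apply b)
      right_inv := by
        rintro ⟨a | b⟩
        · exact congrArg (pl A' B') (f.vEquiv.apply_symm_apply a)
        · exact congrArg (pr A' B') (g.vEquiv.apply_symm_apply b) }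
  eEquiv := Equiv.sumCongr f.eEquiv g.eEquiv
  att_comm := by
    rintro (e | e)
    · exact Prod.ext (congrArg (fun p : A'.V × A'.V => pl A' B' p.1) (f.att_comm e))
        (congrArg (fun p : A'.V × A'.V => pl A' B' p.2) (f.att_comm e))
    · exact Prod.ext (congrArg (fun p : B'.V × B'.V => pr A' B' p.1) (g.att_comm e))
        (congrArg (fun p : B'.V × B'.V => pr A' B' p.2) (g.att_comm e))
  lab_comm := by
    rintro (e | e)
    · exact f.lab_comm e
    · exact g.lab_comm e
  s1_comm := congrArg (pl A' B') f.s1_comm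
  s2_comm := congrArg (pl A' B') f.s2_comm

theorem serFold_append (g : G2 L) (l l' : List (G2 L)) :
    serFold g (l ++ l') = serFold (serFold g l) l' := by
  induction l generalizing g with
  | nil => rfl
  | cons h t ih => exact ih _

theorem parFold_append (g : G2 L) (l l' : List (G2 L)) :
    parFold g (l ++ l') = parFold (parFold g l) l' := by
  induction l generalizing g with
  | nil => rfl
  | cons h t ih => exact ih _

theorem serFold_congr {g g' : G2 L} (f : GIso g g') (l : List (G2 L)) :
    Nonempty (GIso (serFold g l) (serFold g' l)) := by
  induction l generalizing g g' with
  | nil => exact ⟨f⟩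
  | cons h t ih => exact ih (serCongr f (isoRefl h))

theorem parFold_congr {g g' : G2 L} (f : GIso g g') (l : List (G2 L)) :
    Nonempty (GIso (parFold g l) (parFold g' l)) := by
  induction l generalizing g g' with
  | nil => exact ⟨f⟩
  | cons h t ih => exact ih (parCongr f (isoRefl h))

theorem serG_serFold (A b : G2 L) (l : List (G2 L)) :
    Nonempty (GIso (serG A (serFold b l)) (serFold (serG A b) l)) := by
  induction l generalizing b with
  | nil => exact ⟨isoRefl _⟩
  | cons h t ih =>
    obtain ⟨f⟩ := ih (serG b h)
    obtain ⟨g⟩ := serFold_congr (serAssoc A b h) t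
    exact ⟨isoTrans f g⟩

theorem parG_parFold (A b : G2 L) (l : List (G2 L)) :
    Nonempty (GIso (parG A (parFold b l)) (parFold (parG A b) l)) := by
  induction l generalizing b with
  | nil => exact ⟨isoRefl _⟩
  | cons h t ih =>
    obtain ⟨f⟩ := ih (parG b h)
    obtain ⟨g⟩ := parFold_congr (parAssoc A b h) t
    exact ⟨isoTrans f g⟩

/-! ### Existence -/

theorem ser_exists {G : G2 L} (h : IsSP G) : ∃ (g : G2 L) (l : List (G2 L)),
    PGraph g ∧ (∀ H ∈ l, PGraph H) ∧ Nonempty (GIso G (serFold g l)) := by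
  induction h with
  | edge b =>
    exact ⟨_, [], (pgraph_iff (IsSP.edge b)).2 (edge_not_cut b), by simp, ⟨isoRefl _⟩⟩
  | par h1 h2 _ _ =>
    exact ⟨_, [], (pgraph_iff (h1.par h2)).2 (par_not_cut (good_sp h1) (good_sp h2)),
      by simp, ⟨isoRefl _⟩⟩
  | ser _ _ h1 h2 =>
    obtain ⟨a, la, ha, hla, ⟨f⟩⟩ := h1
    obtain ⟨b, lb, hb, hlb, ⟨g⟩⟩ := h2
    refine ⟨a, la ++ b :: lb, ha, ?_, ?_⟩
    · intro H hH
      rcases List.mem_append.1 hH with hH | hH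
      · exact hla H hH
      · rcases List.mem_cons.1 hH with rfl | hH
        · exact hb
        · exact hlb H hH
    · rw [serFold_append]
      obtain ⟨k⟩ := serG_serFold (serFold a la) b lb
      exact ⟨isoTrans (serCongr f g) k⟩
  | iso _ f h =>
    obtain ⟨a, la, ha, hla, ⟨g⟩⟩ := h
    exact ⟨a, la, ha, hla, ⟨isoTrans (isoSymm f) g⟩⟩

/-- Components of parallel decompositions. -/
def Comp (H : G2 L) : Prop := IsSingleEdge H ∨ (IsSP H ∧ ¬ PGraph H)

theorem par_exists {G : G2 L} (h : IsSP G) : ∃ (g : G2 L) (l : List (G2 L)),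
    Comp g ∧ (∀ H ∈ l, Comp H) ∧ Nonempty (GIso G (parFold g l)) := by
  induction h with
  | edge b => exact ⟨_, [], Or.inl ⟨b, ⟨isoRefl _⟩⟩, by simp, ⟨isoRefl _⟩⟩
  | ser h1 h2 _ _ =>
    exact ⟨_, [], Or.inr ⟨h1.ser h2, fun h => h.2 _ _ h1 h2 ⟨isoRefl _⟩⟩, by simp, ⟨isoRefl _⟩⟩
  | par _ _ h1 h2 =>
    obtain ⟨a, la, ha, hla, ⟨f⟩⟩ := h1
    obtain ⟨b, lb, hb, hlb, ⟨g⟩⟩ := h2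
    refine ⟨a, la ++ b :: lb, ha, ?_, ?_⟩
    · intro H hH
      rcases List.mem_append.1 hH with hH | hH
      · exact hla H hH
      · rcases List.mem_cons.1 hH with rfl | hH
        · exact hb
        · exact hlb H hH
    · rw [parFold_append]
      obtain ⟨k⟩ := parG_parFold (parFold a la) b lb
      exact ⟨isoTrans (parCongr f g) k⟩
  | iso _ f h =>
    obtain ⟨a, la, ha, hla, ⟨g⟩⟩ := h
    exact ⟨a, la, ha, hla, ⟨isoTrans (isoSymm f) g⟩⟩

/-! ### Uniqueness for serial decompositions -/

theorem serFold_sp {g : G2 L} (hg : IsSP g) (l : List (G2 L)) (hl : ∀ H ∈ l, PGraph H) :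
    IsSP (serFold g l) := by
  induction l generalizing g with
  | nil => exact hg
  | cons h t ih =>
    exact ih (hg.ser (hl h (by simp)).1) (fun H hH => hl H (by simp [hH]))

theorem ser_unique (l : List (G2 L)) : ∀ (l' : List (G2 L)) (g g' : G2 L), PGraph g → PGraph g' →
    (∀ H ∈ l, PGraph H) → (∀ H ∈ l', PGraph H) → GIso (serFold g l) (serFold g' l') →
    Nonempty (GIso g g') ∧ List.Forall₂ (fun A B => Nonempty (GIso A B)) l l' := by
  induction l using List.reverseRecOn with
  | nil =>
    intro l' g g' hg hg' _ hl' f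
    rcases List.eq_nil_or_concat l' with rfl | ⟨l'', h', rfl⟩
    · exact ⟨⟨f⟩, List.Forall₂.nil⟩
    · rw [List.concat_eq_append, serFold_append] at f
      rw [List.concat_eq_append] at hl'
      exact absurd ⟨f⟩ (hg.2 _ _ (serFold_sp hg'.1 l'' (fun H hH => hl' H (by simp [hH])))
        (hl' h' (by simp)).1)
  | append_singleton l h ih =>
    intro l' g g' hg hg' hl hl' f
    rw [serFold_append] at f
    have hs := serFold_sp hg.1 l (fun H hH => hl H (by simp [hH]))
    have hp := hl h (by simp)
    rcases List.eq_nil_or_concat l' with rfl | ⟨l'', h', rfl⟩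
    · exact absurd ⟨isoSymm f⟩ (hg'.2 _ _ hs hp.1)
    · rw [List.concat_eq_append] at hl' f
      rw [serFold_append] at f
      have hs' := serFold_sp hg'.1 l'' (fun H hH => hl' H (by simp [hH]))
      have hp' := hl' h' (by simp)
      obtain ⟨⟨f1⟩, f2⟩ := ser_cancel (good_sp hs) (good_sp hp.1) (good_sp hs') (good_sp hp'.1)
        ((pgraph_iff hp.1).1 hp) ((pgraph_iff hp'.1).1 hp') f
      obtain ⟨k1, k2⟩ := ih l'' g g' hg hg' (fun H hH => hl H (by simp [hH]))
        (fun H hH => hl' H (by simp [hH])) f1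
      refine ⟨k1, ?_⟩
      rw [List.concat_eq_append]
      exact List.rel_append k2 (List.Forall₂.cons f2 List.Forall₂.nil)

/-! ### Uniqueness for parallel decompositions -/

def At (G : G2 L) (e : G.E) (v : G.V) : Prop := (G.att e).1 = v ∨ (G.att e).2 = v

/-- Edges connected through inner vertices. -/
def Linked (G : G2 L) : G.E → G.E → Prop :=
  Relation.EqvGen (fun e f => ∃ v, v ≠ G.s1 ∧ v ≠ G.s2 ∧ At G e v ∧ At G f v)

theorem linked_to_cut {G : G2 L} (hG : Good G) {j a : G.V} (hj1 : j ≠ G.s1) (hj2 : j ≠ G.s2)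
    (h : Reach G a j) (ha : a ≠ G.s1) {f : G.E} (hf : At G f j) :
    ∀ e, At G e a → Linked G e f := by
  induction h using Relation.ReflTransGen.head_induction_on with
  | refl => exact fun e he => Relation.EqvGen.rel _ _ ⟨j, hj1, hj2, he, hf⟩
  | head h _ ih =>
    rename_i a c _
    obtain ⟨k, hk⟩ := h
    intro e he
    have h1 : (G.att k).1 = a := by rw [hk]
    have h2 : (G.att k).2 = c := by rw [hk]
    refine Relation.EqvGen.trans _ k _ (Relation.EqvGen.rel _ _
      ⟨a, ha, fun h => hG.tl k (h1.trans h), he, Or.inl h1⟩) ?_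
    exact ih (fun h => hG.hd k (h2.trans h)) k (Or.inr h2)

theorem linked_from_cut {G : G2 L} (hG : Good G) {j a : G.V} (hj1 : j ≠ G.s1) (hj2 : j ≠ G.s2)
    (h : Reach G j a) {f : G.E} (hf : At G f j) :
    a ≠ G.s2 → ∀ e, At G e a → Linked G e f := by
  induction h with
  | refl => exact fun _ e he => Relation.EqvGen.rel _ _ ⟨j, hj1, hj2, he, hf⟩
  | tail _ h ih =>
    rename_i c a _
    obtain ⟨k, hk⟩ := h
    intro ha e he
    have h1 : (G.att k).1 = c := by rw [hk]
    have h2 : (G.att k).2 = a := by rw [hk]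
    refine Relation.EqvGen.trans _ k _ (Relation.EqvGen.rel _ _
      ⟨a, fun h => hG.hd k (h2.trans h), ha, he, Or.inr h2⟩) ?_
    exact ih (fun h => hG.tl k (h1.trans h)) k (Or.inl h1)

theorem linked_of_cut {G : G2 L} (hG : Good G) {j : G.V} (hj : Cut G j) (e f : G.E) :
    Linked G e f := by
  obtain ⟨k, hk⟩ := hG.incident j hj.1
  have key : ∀ e, Linked G e k := by
    intro e
    rcases hj.2.2 e with h | h
    · exact linked_to_cut hG hj.1 hj.2.1 h (hG.hd e) (Or.inr hk) e (Or.inr rfl)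
    · exact linked_from_cut hG hj.1 hj.2.1 h (Or.inr hk) (hG.tl e) e (Or.inl rfl)
  exact (key e).trans _ _ _ ((key f).symm _ _)

theorem comp_sp {H : G2 L} (h : Comp H) : IsSP H := by
  rcases h with ⟨b, ⟨f⟩⟩ | h
  · exact (IsSP.edge b).iso (isoSymm f)
  · exact h.1

theorem comp_linked {H : G2 L} (h : Comp H) (e f : H.E) : Linked H e f := by
  rcases h with ⟨b, ⟨g⟩⟩ | h
  · have : e = f := g.eEquiv.injective (Subsingleton.elim (α := Unit) _ _)
    rw [this]
    exact Relation.EqvGen.refl _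
  · have h2 := h.2
    rw [pgraph_iff h.1] at h2
    push Not at h2
    obtain ⟨v, hv⟩ := h2
    exact linked_of_cut (good_sp h.1) hv e f

structure ParDec (G : G2 L) {ι : Type} (comp : ι → G2 L) where
  f : ∀ i, GEmb (comp i) G
  c1 : ∀ i, (f i).fv (comp i).s1 = G.s1
  c2 : ∀ i, (f i).fv (comp i).s2 = G.s2
  cov : ∀ e, ∃ i x, (f i).fe x = e
  edisj : ∀ i j x y, (f i).fe x = (f j).fe y → i = j
  vdisj : ∀ i j x y, (f i).fv x = (f j).fv y → i = j ∨ x = (comp i).s1 ∨ x = (comp i).s2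

def ParDec.ofIso {G H : G2 L} {ι : Type} {comp : ι → G2 L} (D : ParDec G comp) (g : GIso G H) :
    ParDec H comp where
  f := fun i => (isoEmb g).comp (D.f i)
  c1 := fun i => (congrArg g.vEquiv (D.c1 i)).trans g.s1_comm
  c2 := fun i => (congrArg g.vEquiv (D.c2 i)).trans g.s2_comm
  cov := fun e => by
    obtain ⟨i, x, h⟩ := D.cov (g.eEquiv.symm e)
    exact ⟨i, x, (congrArg g.eEquiv h).trans (g.eEquiv.apply_symm_apply e)⟩
  edisj := fun i j x y h => D.edisj i j x y (g.eEquiv.injective h)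
  vdisj := fun i j x y h => D.vdisj i j x y (g.vEquiv.injective h)

def ParDec.reindex {G : G2 L} {ι ι' : Type} {comp : ι → G2 L} (D : ParDec G comp) (e : ι' ≃ ι) :
    ParDec G (fun i => comp (e i)) where
  f := fun i => D.f (e i)
  c1 := fun i => D.c1 (e i)
  c2 := fun i => D.c2 (e i)
  cov := fun k => by
    obtain ⟨i, x, h⟩ := D.cov k
    obtain ⟨i, rfl⟩ := e.surjective i
    exact ⟨i, x, h⟩
  edisj := fun i j x y h => e.injective (D.edisj _ _ x y h)
  vdisj := fun i j x y h => (D.vdisj _ _ x y h).imp_left fun h => e.injective h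

def ParDec.self (G : G2 L) : ParDec G (fun _ : Unit => G) where
  f := fun _ => isoEmb (isoRefl G)
  c1 := fun _ => rfl
  c2 := fun _ => rfl
  cov := fun e => ⟨(), e, rfl⟩
  edisj := fun _ _ _ _ _ => rfl
  vdisj := fun _ _ _ _ _ => Or.inl rfl

def ParDec.extendBy {G : G2 L} {ι : Type} {comp : ι → G2 L} (D : ParDec G comp) (H : G2 L)
    (hG : Good G) (hH : Good H) : ParDec (parG G H) (Sum.elim comp (fun _ : Unit => H)) where
  f := fun i => match i with
    | Sum.inl i => (embPl G H hH.ne).comp (D.f i)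
    | Sum.inr _ => embPr G H hG.ne
  c1 := by
    rintro (i | i)
    · exact congrArg (pl G H) (D.c1 i)
    · exact (p_s1 G H).symm
  c2 := by
    rintro (i | i)
    · exact congrArg (pl G H) (D.c2 i)
    · exact (p_s2 G H).symm
  cov := by
    rintro (e | e)
    · obtain ⟨i, x, h⟩ := D.cov e
      exact ⟨Sum.inl i, x, congrArg Sum.inl h⟩
    · exact ⟨Sum.inr (), e, rfl⟩
  edisj := by
    rintro (i | i) (j | j) x y h
    · exact congrArg Sum.inl (D.edisj i j x y (Sum.inl_injective h))
    · exact absurd h (by exact Sum.inl_ne_inr)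
    · exact absurd h (by exact Sum.inr_ne_inl)
    · rfl
  vdisj := by
    rintro (i | i) (j | j) x y h
    · rcases D.vdisj i j x y (pl_inj hH.ne h) with h | h
      · exact Or.inl (congrArg Sum.inl h)
      · exact Or.inr h
    · right
      rcases pl_eq_pr hH.ne h with ⟨h, _⟩ | ⟨h, _⟩
      · exact Or.inl ((D.f i).vinj (h.trans (D.c1 i).symm))
      · exact Or.inr ((D.f i).vinj (h.trans (D.c2 i).symm))
    · right
      rcases pl_eq_pr hH.ne h.symm with ⟨_, h⟩ | ⟨_, h⟩
      · exact Or.inl h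
      · exact Or.inr h
    · exact Or.inl rfl

def finEquiv (ι : Type) (n : ℕ) : ι ⊕ Fin (n + 1) ≃ (ι ⊕ Unit) ⊕ Fin n where
  toFun := Sum.elim (fun i => Sum.inl (Sum.inl i))
    (Fin.cases (Sum.inl (Sum.inr ())) (fun k => Sum.inr k))
  invFun := Sum.elim (Sum.elim Sum.inl (fun _ => Sum.inr 0)) (fun k => Sum.inr k.succ)
  left_inv := by
    rintro (i | k)
    · rfl
    · refine Fin.cases ?_ (fun k => ?_) k <;> rfl
  right_inv := by rintro ((i | i) | k) <;> rfl

def finEquiv' (n : ℕ) : Fin (n + 1) ≃ Unit ⊕ Fin n where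
  toFun := Fin.cases (Sum.inl ()) (fun k => Sum.inr k)
  invFun := Sum.elim (fun _ => 0) (fun k => k.succ)
  left_inv := by
    intro k
    refine Fin.cases ?_ (fun k => ?_) k <;> rfl
  right_inv := by rintro (i | k) <;> rfl

theorem parDec_fold (l : List (G2 L)) : ∀ {G : G2 L} {ι : Type} {comp : ι → G2 L}
    (_ : ParDec G comp) (_ : Good G) (_ : ∀ H ∈ l, Good H),
    Nonempty (ParDec (parFold G l) (Sum.elim comp l.get)) := by
  induction l with
  | nil =>
    intro G ι comp D _ _
    have D' := D.reindex (Equiv.sumEmpty ι (Fin 0))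
    have h : (Sum.elim comp (List.nil (α := G2 L)).get) =
        fun i => comp (Equiv.sumEmpty ι (Fin 0) i) := by
      funext i
      rcases i with i | i
      · rfl
      · exact i.elim0
    rw [h]
    exact ⟨D'⟩
  | cons h t ih =>
    intro G ι comp D hG hl
    have hh := hl h (by simp)
    obtain ⟨D1⟩ := ih (D.extendBy h hG hh) (good_par hG hh) (fun H hH => hl H (by simp [hH]))
    have D2 := D1.reindex (finEquiv ι t.length)
    have h : (Sum.elim comp (h :: t).get) = fun i => (Sum.elim (Sum.elim comp fun _ : Unit => h)
        t.get) (finEquiv ι t.length i) := by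
      funext i
      rcases i with i | k
      · rfl
      · refine Fin.cases ?_ (fun k => ?_) k <;> rfl
    rw [h]
    exact ⟨D2⟩

theorem parDec_list (g : G2 L) (l : List (G2 L)) (hg : Good g) (hl : ∀ H ∈ l, Good H) :
    Nonempty (ParDec (parFold g l) (g :: l).get) := by
  obtain ⟨D⟩ := parDec_fold l (ParDec.self g) hg hl
  have D2 := D.reindex (finEquiv' l.length)
  have h : (g :: l).get = fun i => (Sum.elim (fun _ : Unit => g) l.get)
      (finEquiv' l.length i) := by
    funext i
    refine Fin.cases ?_ (fun k => ?_) i <;> rfl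
  rw [h]
  exact ⟨D2⟩

theorem ParDec.linked_lift {G : G2 L} {ι : Type} {comp : ι → G2 L} (D : ParDec G comp) {i : ι}
    {x y : (comp i).E} (h : Linked (comp i) x y) : Linked G ((D.f i).fe x) ((D.f i).fe y) := by
  have hat : ∀ e v, At (comp i) e v → At G ((D.f i).fe e) ((D.f i).fv v) := by
    intro e v h
    unfold At
    rw [(D.f i).att_comm]
    exact h.imp (congrArg _) (congrArg _)
  induction h with
  | rel e f h =>
    obtain ⟨v, h1, h2, h3, h4⟩ := h
    refine Relation.EqvGen.rel _ _ ⟨(D.f i).fv v, ?_, ?_, hat _ _ h3, hat _ _ h4⟩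
    · rw [← D.c1 i]; exact fun h => h1 ((D.f i).vinj h)
    · rw [← D.c2 i]; exact fun h => h2 ((D.f i).vinj h)
  | refl => exact Relation.EqvGen.refl _
  | symm _ _ _ ih => exact ih.symm _ _
  | trans _ _ _ _ _ ih1 ih2 => exact ih1.trans _ _ _ ih2

theorem ParDec.color {G : G2 L} {ι : Type} {comp : ι → G2 L} (D : ParDec G comp) (i : ι)
    {e f : G.E} (h : Linked G e f) : (∃ x, (D.f i).fe x = e) ↔ ∃ x, (D.f i).fe x = f := by
  have hat : ∀ j x v, At G ((D.f j).fe x) v → ∃ a, (D.f j).fv a = v := by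
    intro j x v h
    unfold At at h
    rw [(D.f j).att_comm] at h
    rcases h with h | h
    · exact ⟨_, h⟩
    · exact ⟨_, h⟩
  have key : ∀ e f v, v ≠ G.s1 → v ≠ G.s2 → At G e v → At G f v →
      (∃ x, (D.f i).fe x = e) → ∃ x, (D.f i).fe x = f := by
    rintro e f v h1 h2 h3 h4 ⟨x, rfl⟩
    obtain ⟨j, y, rfl⟩ := D.cov f
    obtain ⟨a, ha⟩ := hat _ _ _ h3
    obtain ⟨b, hb⟩ := hat _ _ _ h4
    rcases D.vdisj i j a b (ha.trans hb.symm) with h | h | h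
    · subst h
      exact ⟨y, rfl⟩
    · rw [h, D.c1] at ha
      exact absurd ha.symm h1
    · rw [h, D.c2] at ha
      exact absurd ha.symm h2
  induction h with
  | rel e f h =>
    obtain ⟨v, h1, h2, h3, h4⟩ := h
    exact ⟨key _ _ v h1 h2 h3 h4, key _ _ v h1 h2 h4 h3⟩
  | refl => rfl
  | symm _ _ _ ih => exact ih.symm
  | trans _ _ _ _ _ ih1 ih2 => exact ih1.trans ih2

theorem ParDec.image {G : G2 L} {ι ι' : Type} {comp : ι → G2 L} {comp' : ι' → G2 L}
    (D : ParDec G comp) (D' : ParDec G comp') {i : ι} {i' : ι'} (hl : ∀ x y, Linked (comp i) x y)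
    (h : ∃ x x', (D'.f i').fe x' = (D.f i).fe x) (x : (comp i).E) :
    ∃ x', (D'.f i').fe x' = (D.f i).fe x := by
  obtain ⟨y, y', h⟩ := h
  exact (D'.color i' (D.linked_lift (hl y x))).1 ⟨y', h⟩

theorem parDec_unique {G : G2 L} {ι ι' : Type} {comp : ι → G2 L} {comp' : ι' → G2 L}
    (D : ParDec G comp) (D' : ParDec G comp') (h : ∀ i, Comp (comp i))
    (h' : ∀ i, Comp (comp' i)) :
    ∃ e : ι ≃ ι', ∀ i, Nonempty (GIso (comp i) (comp' (e i))) := by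
  have ex : ∀ i, ∃ i', ∃ x x', (D'.f i').fe x' = (D.f i).fe x := by
    intro i
    obtain ⟨x, -⟩ := (good_sp (comp_sp (h i))).edge_ex
    obtain ⟨i', x', hx⟩ := D'.cov ((D.f i).fe x)
    exact ⟨i', x, x', hx⟩
  have ex' : ∀ i', ∃ i, ∃ x' x, (D.f i).fe x = (D'.f i').fe x' := by
    intro i
    obtain ⟨x, -⟩ := (good_sp (comp_sp (h' i))).edge_ex
    obtain ⟨i', x', hx⟩ := D.cov ((D'.f i).fe x)
    exact ⟨i', x, x', hx⟩
  choose σ hσ using ex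
  choose τ hτ using ex'
  refine ⟨⟨σ, τ, ?_, ?_⟩, ?_⟩
  · intro i
    obtain ⟨x, x', hx⟩ := hσ i
    obtain ⟨y, hy⟩ := D'.image D (comp_linked (h' _)) (hτ (σ i)) x'
    exact D.edisj _ _ _ _ (hy.trans hx)
  · intro i
    obtain ⟨x, x', hx⟩ := hτ i
    obtain ⟨y, hy⟩ := D.image D' (comp_linked (h _)) (hσ (τ i)) x'
    exact D'.edisj _ _ _ _ (hy.trans hx)
  · intro i
    refine iso_of_emb (D.f i) (D'.f (σ i)) (good_sp (comp_sp (h _))) (good_sp (comp_sp (h' _)))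
      ((D.c1 _).trans (D'.c1 _).symm) ((D.c2 _).trans (D'.c2 _).symm) ?_ ?_
    · exact D.image D' (comp_linked (h i)) (hσ i)
    · obtain ⟨x, x', hx⟩ := hσ i
      exact D'.image D (comp_linked (h' _)) ⟨x', x, hx.symm⟩

theorem par_unique {g g' : G2 L} {l l' : List (G2 L)} (hg : Comp g) (hg' : Comp g')
    (hl : ∀ H ∈ l, Comp H) (hl' : ∀ H ∈ l', Comp H) (f : GIso (parFold g l) (parFold g' l')) :
    ∃ e : Fin (g :: l).length ≃ Fin (g' :: l').length,
      ∀ i, Nonempty (GIso ((g :: l).get i) ((g' :: l').get (e i))) := by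
  obtain ⟨D⟩ := parDec_list g l (good_sp (comp_sp hg)) (fun H hH => good_sp (comp_sp (hl H hH)))
  obtain ⟨D'⟩ := parDec_list g' l' (good_sp (comp_sp hg'))
    (fun H hH => good_sp (comp_sp (hl' H hH)))
  refine parDec_unique (D.ofIso f) D' (fun i => ?_) (fun i => ?_)
  · rcases List.mem_cons.1 (List.get_mem (g :: l) i) with h | h
    · rw [h]; exact hg
    · exact hl _ h
  · rcases List.mem_cons.1 (List.get_mem (g' :: l') i) with h | h
    · rw [h]; exact hg'
    · exact hl' _ h

end SPaux

/-- canonical decomposition of series-parallel graphs. Every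
S-graph is a serial composition of a unique sequence of at least two P-graphs
(unique up to componentwise isomorphism), and every P-graph is either a single
edge or a parallel composition of a unique collection of at least two single
edges and S-graphs (unique up to a bijection matching isomorphic
components). -/
theorem sp_canonical_decomposition {L : Type} (G : G2 L) (hG : IsSP G) :
    (¬ PGraph G →
      ∃ (g : G2 L) (l : List (G2 L)), l ≠ [] ∧ PGraph g ∧ (∀ H ∈ l, PGraph H) ∧
        Nonempty (GIso G (serFold g l)) ∧
        (∀ (g' : G2 L) (l' : List (G2 L)), l' ≠ [] → PGraph g' →
          (∀ H ∈ l', PGraph H) → Nonempty (GIso G (serFold g' l')) →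
          Nonempty (GIso g g') ∧
          ∃ hlen : l.length = l'.length,
            ∀ i : Fin l.length, Nonempty (GIso (l.get i) (l'.get (Fin.cast hlen i))))) ∧
    (PGraph G → ¬ IsSingleEdge G →
      ∃ (g : G2 L) (l : List (G2 L)), l ≠ [] ∧
        (IsSingleEdge g ∨ (IsSP g ∧ ¬ PGraph g)) ∧
        (∀ H ∈ l, IsSingleEdge H ∨ (IsSP H ∧ ¬ PGraph H)) ∧
        Nonempty (GIso G (parFold g l)) ∧
        (∀ (g' : G2 L) (l' : List (G2 L)), l' ≠ [] →
          (IsSingleEdge g' ∨ (IsSP g' ∧ ¬ PGraph g')) →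
          (∀ H ∈ l', IsSingleEdge H ∨ (IsSP H ∧ ¬ PGraph H)) →
          Nonempty (GIso G (parFold g' l')) →
          ∃ e : Fin (g :: l).length ≃ Fin (g' :: l').length,
            ∀ i, Nonempty (GIso ((g :: l).get i) ((g' :: l').get (e i))))) := by
  constructor
  · intro hnp
    obtain ⟨g, l, hg, hl, ⟨f⟩⟩ := SPaux.ser_exists hG
    refine ⟨g, l, ?_, hg, hl, ⟨f⟩, ?_⟩
    · rintro rfl
      exact hnp (SPaux.pgraph_iso (SPaux.isoSymm f) hg)
    · rintro g' l' _ hg' hl' ⟨f'⟩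
      obtain ⟨h1, h2⟩ := SPaux.ser_unique l l' g g' hg hg' hl hl'
        (SPaux.isoTrans (SPaux.isoSymm f) f')
      exact ⟨h1, h2.length_eq, fun i => h2.get _ _⟩
  · intro hp hne
    obtain ⟨g, l, hg, hl, ⟨f⟩⟩ := SPaux.par_exists hG
    refine ⟨g, l, ?_, hg, hl, ⟨f⟩, ?_⟩
    · rintro rfl
      rcases hg with ⟨b, ⟨k⟩⟩ | ⟨_, h⟩
      · exact hne ⟨b, ⟨SPaux.isoTrans f k⟩⟩
      · exact h (SPaux.pgraph_iso f hp)
    · rintro g' l' _ hg' hl' ⟨f'⟩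
      exact SPaux.par_unique hg hg' hl hl' (SPaux.isoTrans (SPaux.isoSymm f) f')
end

section
/- Let G be a connected graph of tree-width at most 2, B a nontrivial block of G, and x any vertex of B. Then there exists a vertex y of B with an edge between x and y such that B with 1-source x and 2-source y is a ∘-atomic disoriented series-parallel graph. -/
/-- A graph with binary labeled edges. -/
structure BGraph (L : Type) where
  V : Type
  E : Type
  att : E → V × V
  lab : E → L

/-- Adjacency inside a subgraph `(VS, ES)` of `G`. -/
def adjIn {L : Type} (G : BGraph L) (VS : Set G.V) (ES : Set G.E)
    (u v : G.V) : Prop :=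
  u ∈ VS ∧ v ∈ VS ∧ ∃ e ∈ ES, G.att e = (u, v) ∨ G.att e = (v, u)

/-- Connectivity (existence of an undirected path) inside a subgraph. -/
def connIn {L : Type} (G : BGraph L) (VS : Set G.V) (ES : Set G.E)
    (u v : G.V) : Prop :=
  Relation.ReflTransGen (adjIn G VS ES) u v

/-- `(VS, ES)` is a subgraph: attachments of selected edges are selected. -/
def IsSub {L : Type} (G : BGraph L) (VS : Set G.V) (ES : Set G.E) : Prop :=
  ∀ e ∈ ES, (G.att e).1 ∈ VS ∧ (G.att e).2 ∈ VS

/-- `w` is a cutvertex of the subgraph `(VS, ES)`: two vertices distinct from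
`w` are connected in the subgraph but disconnected after removing `w` and all
its incident edges. -/
def CutvertexIn {L : Type} (G : BGraph L) (VS : Set G.V) (ES : Set G.E)
    (w : G.V) : Prop :=
  w ∈ VS ∧ ∃ u v : G.V, u ∈ VS ∧ v ∈ VS ∧ u ≠ w ∧ v ≠ w ∧
    connIn G VS ES u v ∧
    ¬ connIn G (VS \ {w}) (ES \ {e | (G.att e).1 = w ∨ (G.att e).2 = w}) u v

/-- The subgraph `(VS, ES)` is connected and nonempty. -/
def ConnSub {L : Type} (G : BGraph L) (VS : Set G.V) (ES : Set G.E) : Prop :=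
  VS.Nonempty ∧ ∀ u ∈ VS, ∀ v ∈ VS, connIn G VS ES u v

/-- A block of `G`: a maximal connected subgraph without a cutvertex. -/
def IsBlock {L : Type} (G : BGraph L) (VS : Set G.V) (ES : Set G.E) : Prop :=
  IsSub G VS ES ∧ ConnSub G VS ES ∧ (¬ ∃ w, CutvertexIn G VS ES w) ∧
    ∀ VS' ES', IsSub G VS' ES' → ConnSub G VS' ES' →
      (¬ ∃ w, CutvertexIn G VS' ES' w) → VS ⊆ VS' → ES ⊆ ES' →
      VS' = VS ∧ ES' = ES

/-- `Anc par m n`: `m` is an ancestor of `n` in the rooted tree given by the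
parent map `par`. -/
def Anc {N : Type} (par : N → Option N) (m n : N) : Prop :=
  Relation.ReflTransGen (fun a b => par a = some b) n m

/-- `G` has a tree decomposition of width at most 2: a rooted tree with bags of
at most 3 vertices covering all vertices and edges, with connected occurrence
sets. -/
def TWle2 {L : Type} (G : BGraph L) : Prop :=
  ∃ (N : Type) (par : N → Option N) (β : N → Set G.V),
    (∃ r, par r = none ∧ ∀ m, Anc par r m) ∧
    (∀ e : G.E, ∃ n, (G.att e).1 ∈ β n ∧ (G.att e).2 ∈ β n) ∧
    (∀ v : G.V, ∃ n, v ∈ β n) ∧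
    (∀ (v : G.V) (n m k : N), v ∈ β n → v ∈ β m →
      Anc par m n → Anc par k n → Anc par m k → v ∈ β k) ∧
    (∀ (v : G.V) (n₁ n₂ m : N), v ∈ β n₁ → v ∈ β n₂ →
      Anc par m n₁ → Anc par m n₂ →
      (∀ m', Anc par m' n₁ → Anc par m' n₂ → Anc par m' m) → v ∈ β m) ∧
    (∀ n, (β n).Finite ∧ (β n).ncard ≤ 3)

/-- The subgraph `(VS, ES)` of `G`, viewed as a graph of sort `{1,2}` with
1-source `x` and 2-source `y`. -/
def subG2 {L : Type} (G : BGraph L) (VS : Set G.V) (ES : Set G.E)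
    (hcl : IsSub G VS ES) (x y : G.V) (hx : x ∈ VS) (hy : y ∈ VS) : G2 L where
  V := VS
  E := ES
  att := fun e => (⟨(G.att e.1).1, (hcl e.1 e.2).1⟩, ⟨(G.att e.1).2, (hcl e.1 e.2).2⟩)
  lab := fun e => G.lab e.1
  s1 := ⟨x, hx⟩
  s2 := ⟨y, hy⟩

/-! ### Distinct sources and atomicity -/

lemma ser_inl_inr {L : Type} {G H : G2 L} {w : G.V} {z : H.V}
    (h : (Quot.mk (serRel G H) (Sum.inl w)) = Quot.mk _ (Sum.inr z)) : z = H.s1 := by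
  let φ : Quot (serRel G H) → Prop :=
    Quot.lift (Sum.elim (fun _ => True) (fun z => z = H.s1)) (by
      rintro a b ⟨rfl, rfl⟩; simp)
  have h2 : φ (Quot.mk _ (Sum.inl w)) = φ (Quot.mk _ (Sum.inr z)) := by rw [h]
  have h3 : True = (z = H.s1) := h2
  rw [← h3]; trivial

lemma ser_inl_inr' {L : Type} {G H : G2 L} {w : G.V} {z : H.V}
    (h : (Quot.mk (serRel G H) (Sum.inl w)) = Quot.mk _ (Sum.inr z)) : w = G.s2 := by
  let φ : Quot (serRel G H) → Prop :=
    Quot.lift (Sum.elim (fun w => w = G.s2) (fun _ => True)) (by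
      rintro a b ⟨rfl, rfl⟩; simp)
  have h2 : φ (Quot.mk _ (Sum.inl w)) = φ (Quot.mk _ (Sum.inr z)) := by rw [h]
  have h3 : (w = G.s2) = True := h2
  rw [h3]; trivial

lemma dsp_ne {L : Type} {G : G2 L} (h : IsDSP G) : G.s1 ≠ G.s2 := by
  induction h with
  | edge b => simp [edgeG]
  | redge b => simp [edgeRG]
  | @par G H _ _ ih1 ih2 =>
    intro h
    let φ : Quot (parRel G H) → Prop :=
      Quot.lift (Sum.elim (fun w => w = G.s1) (fun z => z = H.s1)) (by
        rintro a b (⟨rfl, rfl⟩ | ⟨rfl, rfl⟩)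
        · simp
        · simp [ih1.symm, ih2.symm])
    have h2 : φ (Quot.mk _ (Sum.inl G.s1)) = φ (Quot.mk _ (Sum.inl G.s2)) := congrArg φ h
    have h3 : (G.s1 = G.s1) = (G.s2 = G.s1) := h2
    exact ih1 (h3 ▸ rfl : G.s2 = G.s1).symm
  | @ser G H _ _ ih1 ih2 =>
    intro h
    exact ih2 (ser_inl_inr h).symm
  | @iso G H _ i ih =>
    intro h
    rw [← i.s1_comm, ← i.s2_comm] at h
    exact ih (i.vEquiv.injective h)

lemma ser_no_edge {L : Type} {G H : G2 L} (hG : IsDSP G) (hH : IsDSP H) (e : (serG G H).E) :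
    (serG G H).att e ≠ ((serG G H).s1, (serG G H).s2) ∧
    (serG G H).att e ≠ ((serG G H).s2, (serG G H).s1) := by
  have h1 := dsp_ne hG
  have h2 := dsp_ne hH
  constructor <;> intro h <;> have ha := congrArg Prod.fst h <;> have hb := congrArg Prod.snd h <;>
    rcases e with e | e
  · exact h2 (ser_inl_inr hb).symm
  · exact h1 (ser_inl_inr' ha.symm)
  · exact h2 (ser_inl_inr ha).symm
  · exact h1 (ser_inl_inr' hb.symm)

/-! ### Internal series-parallel pieces of a graph -/

inductive DP {L : Type} (G : BGraph L) : Set G.V → Set G.E → G.V → G.V → Prop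
  | edge (e : G.E) (a b : G.V) : a ≠ b → (G.att e = (a, b) ∨ G.att e = (b, a)) →
      DP G {a, b} {e} a b
  | par {V₁ V₂ : Set G.V} {E₁ E₂ : Set G.E} {a b : G.V} : DP G V₁ E₁ a b → DP G V₂ E₂ a b →
      (∀ u, u ∈ V₁ → u ∈ V₂ → u = a ∨ u = b) → (∀ e, e ∈ E₁ → e ∈ E₂ → False) →
      DP G (V₁ ∪ V₂) (E₁ ∪ E₂) a b
  | ser {V₁ V₂ : Set G.V} {E₁ E₂ : Set G.E} {a v b : G.V} : DP G V₁ E₁ a v → DP G V₂ E₂ v b →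
      (∀ u, u ∈ V₁ → u ∈ V₂ → u = v) → (∀ e, e ∈ E₁ → e ∈ E₂ → False) →
      DP G (V₁ ∪ V₂) (E₁ ∪ E₂) a b

lemma DP.symm {L : Type} {G : BGraph L} {W : Set G.V} {F : Set G.E} {a b : G.V}
    (h : DP G W F a b) : DP G W F b a := by
  induction h with
  | edge e a b hab he =>
    rw [Set.pair_comm]; exact DP.edge e b a hab.symm he.symm
  | par _ _ h1 h2 ih1 ih2 => exact DP.par ih1 ih2 (fun u h h' => (h1 u h h').symm) h2
  | ser _ _ h1 h2 ih1 ih2 =>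
    rw [Set.union_comm, Set.union_comm (_ : Set G.E)]
    exact DP.ser ih2 ih1 (fun u h h' => h1 u h' h) (fun u h h' => h2 u h' h)

lemma DP.sub {L : Type} {G : BGraph L} {W : Set G.V} {F : Set G.E} {a b : G.V}
    (h : DP G W F a b) : IsSub G W F ∧ a ∈ W ∧ b ∈ W := by
  induction h with
  | edge e a b hab he =>
    refine ⟨?_, by simp, by simp⟩
    intro e' he'
    rw [Set.mem_singleton_iff] at he'
    subst he'
    rcases he with he | he <;> rw [he] <;> simp
  | par _ _ _ _ ih1 ih2 =>
    refine ⟨?_, Or.inl ih1.2.1, Or.inl ih1.2.2⟩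
    rintro e (he | he)
    · exact ⟨Or.inl (ih1.1 e he).1, Or.inl (ih1.1 e he).2⟩
    · exact ⟨Or.inr (ih2.1 e he).1, Or.inr (ih2.1 e he).2⟩
  | ser _ _ _ _ ih1 ih2 =>
    refine ⟨?_, Or.inl ih1.2.1, Or.inr ih2.2.2⟩
    rintro e (he | he)
    · exact ⟨Or.inl (ih1.1 e he).1, Or.inl (ih1.1 e he).2⟩
    · exact ⟨Or.inr (ih2.1 e he).1, Or.inr (ih2.1 e he).2⟩

lemma quot_bij {α β γ : Type} (r : α ⊕ β → α ⊕ β → Prop) (f : α → γ) (g : β → γ)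
    (hr : ∀ a b, r a b → Sum.elim f g a = Sum.elim f g b)
    (hf : Function.Injective f) (hg : Function.Injective g)
    (hfg : ∀ a b, f a = g b → Quot.mk r (Sum.inl a) = Quot.mk r (Sum.inr b))
    (hs : ∀ c, (∃ a, f a = c) ∨ ∃ b, g b = c) :
    Function.Bijective (Quot.lift (Sum.elim f g) hr) := by
  constructor
  · rintro ⟨a | a⟩ ⟨b | b⟩ h
    · have : f a = f b := h
      rw [hf this]
    · exact hfg a b h
    · exact (hfg b a h.symm).symm
    · have : g a = g b := h
      rw [hg this]
  · intro c
    rcases hs c with ⟨a, h⟩ | ⟨a, h⟩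
    · exact ⟨Quot.mk _ (Sum.inl a), h⟩
    · exact ⟨Quot.mk _ (Sum.inr a), h⟩

lemma sum_bij {α : Type} (S T : Set α) (h : ∀ e, e ∈ S → e ∈ T → False) :
    Function.Bijective (Sum.elim (fun e : S => (⟨e.1, Or.inl e.2⟩ : ↥(S ∪ T)))
      (fun e : T => (⟨e.1, Or.inr e.2⟩ : ↥(S ∪ T)))) := by
  constructor
  · rintro (a | a) (b | b) h'
    · have := congrArg Subtype.val h'
      exact congrArg Sum.inl (Subtype.ext this)
    · have : a.1 = b.1 := congrArg Subtype.val h'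
      exact (h a.1 a.2 (this ▸ b.2)).elim
    · have : a.1 = b.1 := congrArg Subtype.val h'
      exact (h b.1 b.2 (this ▸ a.2)).elim
    · have := congrArg Subtype.val h'
      exact congrArg Sum.inr (Subtype.ext this)
  · rintro ⟨c, hc | hc⟩
    · exact ⟨Sum.inl ⟨c, hc⟩, rfl⟩
    · exact ⟨Sum.inr ⟨c, hc⟩, rfl⟩

lemma pair_bij {α : Type} (a b : α) (h : a ≠ b) :
    Function.Bijective (fun t : Bool => (if t then ⟨b, by simp⟩ else ⟨a, by simp⟩ : ({a, b} : Set α))) := by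
  constructor
  · rintro (_ | _) (_ | _) h' <;> simp_all
  · rintro ⟨c, hc⟩
    rcases hc with hc | hc
    · exact ⟨false, by simp [hc]⟩
    · exact ⟨true, Subtype.ext (by simpa using (Set.mem_singleton_iff.1 hc).symm)⟩

lemma DP.sound {L : Type} {G : BGraph L} {W : Set G.V} {F : Set G.E} {a b : G.V}
    (h : DP G W F a b) : ∀ (hcl : IsSub G W F) (ha : a ∈ W) (hb : b ∈ W),
      IsDSP (subG2 G W F hcl a b ha hb) := by
  induction h with
  | edge e a b hab he =>
    intro hcl ha hb
    rcases he with he | he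
    · refine IsDSP.iso (IsDSP.edge (G.lab e)) ⟨Equiv.ofBijective _ (pair_bij a b hab),
        (Equiv.ofUnique Unit ({e} : Set G.E)), ?_, ?_, ?_, ?_⟩
      · rintro ⟨⟩
        apply Prod.ext <;> apply Subtype.ext
        · exact congrArg Prod.fst he
        · exact congrArg Prod.snd he
      · rintro ⟨⟩; rfl
      · rfl
      · rfl
    · refine IsDSP.iso (IsDSP.redge (G.lab e)) ⟨Equiv.ofBijective _ (pair_bij a b hab),
        (Equiv.ofUnique Unit ({e} : Set G.E)), ?_, ?_, ?_, ?_⟩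
      · rintro ⟨⟩
        apply Prod.ext <;> apply Subtype.ext
        · exact congrArg Prod.fst he
        · exact congrArg Prod.snd he
      · rintro ⟨⟩; rfl
      · rfl
      · rfl
  | @par V₁ V₂ E₁ E₂ a b h1 h2 hV hE ih1 ih2 =>
    intro hcl ha hb
    obtain ⟨s1, a1, b1⟩ := h1.sub
    obtain ⟨s2, a2, b2⟩ := h2.sub
    refine IsDSP.iso (IsDSP.par (ih1 s1 a1 b1) (ih2 s2 a2 b2))
      ⟨Equiv.ofBijective _ (quot_bij _ (fun e : V₁ => (⟨e.1, Or.inl e.2⟩ : ↥(V₁ ∪ V₂)))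
        (fun e : V₂ => (⟨e.1, Or.inr e.2⟩ : ↥(V₁ ∪ V₂))) ?_ ?_ ?_ ?_ ?_),
        Equiv.ofBijective _ (sum_bij E₁ E₂ hE), ?_, ?_, ?_, ?_⟩
    · rintro _ _ (⟨rfl, rfl⟩ | ⟨rfl, rfl⟩) <;> rfl
    · intro u v h; exact Subtype.ext (Subtype.mk.inj h)
    · intro u v h; exact Subtype.ext (Subtype.mk.inj h)
    · rintro ⟨u, hu⟩ ⟨v, hv⟩ h
      have h : u = v := congrArg Subtype.val h
      subst h
      rcases hV u hu hv with rfl | rfl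
      · exact Quot.sound (Or.inl ⟨rfl, rfl⟩)
      · exact Quot.sound (Or.inr ⟨rfl, rfl⟩)
    · rintro ⟨c, hc | hc⟩
      · exact Or.inl ⟨⟨c, hc⟩, rfl⟩
      · exact Or.inr ⟨⟨c, hc⟩, rfl⟩
    · rintro (e | e) <;> rfl
    · rintro (e | e) <;> rfl
    · rfl
    · rfl
  | @ser V₁ V₂ E₁ E₂ a v b h1 h2 hV hE ih1 ih2 =>
    intro hcl ha hb
    obtain ⟨s1, a1, b1⟩ := h1.sub
    obtain ⟨s2, a2, b2⟩ := h2.sub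
    refine IsDSP.iso (IsDSP.ser (ih1 s1 a1 b1) (ih2 s2 a2 b2))
      ⟨Equiv.ofBijective _ (quot_bij _ (fun e : V₁ => (⟨e.1, Or.inl e.2⟩ : ↥(V₁ ∪ V₂)))
        (fun e : V₂ => (⟨e.1, Or.inr e.2⟩ : ↥(V₁ ∪ V₂))) ?_ ?_ ?_ ?_ ?_),
        Equiv.ofBijective _ (sum_bij E₁ E₂ hE), ?_, ?_, ?_, ?_⟩
    · rintro _ _ ⟨rfl, rfl⟩; rfl
    · intro u v h; exact Subtype.ext (Subtype.mk.inj h)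
    · intro u v h; exact Subtype.ext (Subtype.mk.inj h)
    · rintro ⟨u, hu⟩ ⟨w, hw⟩ h
      have h : u = w := congrArg Subtype.val h
      subst h
      have := hV u hu hw
      subst this
      exact Quot.sound ⟨rfl, rfl⟩
    · rintro ⟨c, hc | hc⟩
      · exact Or.inl ⟨⟨c, hc⟩, rfl⟩
      · exact Or.inr ⟨⟨c, hc⟩, rfl⟩
    · rintro (e | e) <;> rfl
    · rintro (e | e) <;> rfl
    · rfl
    · rfl

/-! ### Tree decompositions: simplicial vertices -/

/-- The combinatorial content of a tree decomposition of width 2. -/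
def Simpl {V N : Type} (β : N → Set V) (A : Set V) (w : V) : Prop :=
  ∃ n, w ∈ β n ∧ ∀ u ∈ A, ∀ m, u ∈ β m → w ∈ β m → u ∈ β n

lemma tree_simplicial {V N : Type} (par : N → Option N) (β : N → Set V)
    (hroot : ∃ r, par r = none ∧ ∀ m, Anc par r m)
    (hcov : ∀ v : V, ∃ n, v ∈ β n)
    (hvert : ∀ (v : V) (n m k : N), v ∈ β n → v ∈ β m →
      Anc par m n → Anc par k n → Anc par m k → v ∈ β k)
    (hlca : ∀ (v : V) (n₁ n₂ m : N), v ∈ β n₁ → v ∈ β n₂ →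
      Anc par m n₁ → Anc par m n₂ →
      (∀ m', Anc par m' n₁ → Anc par m' n₂ → Anc par m' m) → v ∈ β m)
    (A : Finset V) (hA : A.Nonempty) : ∃ w ∈ A, Simpl β A w := by
  classical
  obtain ⟨r, hr, hanc⟩ := hroot
  let f : N → N := fun m => (par m).getD m
  have fr : f r = r := by simp [f, hr]
  have anc_iter : ∀ a n, Anc par a n → ∃ k, f^[k] n = a := by
    intro a n h
    induction h with
    | refl => exact ⟨0, rfl⟩
    | tail _ hbc ih =>
      obtain ⟨k, hk⟩ := ih
      refine ⟨k + 1, ?_⟩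
      rw [Function.iterate_succ_apply', hk]
      simp [f, hbc]
  have iter_anc : ∀ k n, Anc par (f^[k] n) n := by
    intro k n
    induction k with
    | zero => exact Relation.ReflTransGen.refl
    | succ k ih =>
      rw [Function.iterate_succ_apply']
      cases hp : par (f^[k] n) with
      | none => simpa [f, hp] using ih
      | some b =>
        have : f (f^[k] n) = b := by simp [f, hp]
        rw [this]
        exact Relation.ReflTransGen.tail ih hp
  have hex : ∀ m, ∃ k, f^[k] m = r := fun m => anc_iter r m (hanc m)
  let d : N → ℕ := fun m => Nat.find (hex m)
  have hd : ∀ m, f^[d m] m = r := fun m => Nat.find_spec (hex m)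
  have hdmin : ∀ m k, f^[k] m = r → d m ≤ k := fun m k h => Nat.find_min' (hex m) h
  have hrk : ∀ k, f^[k] r = r := fun k => Function.iterate_fixed fr k
  -- the depth of an iterate
  have hdk : ∀ n k, k ≤ d n → d (f^[k] n) = d n - k := by
    intro n k hk
    apply le_antisymm
    · apply hdmin
      rw [← Function.iterate_add_apply, Nat.sub_add_cancel hk, hd]
    · have h1 := hd (f^[k] n)
      rw [← Function.iterate_add_apply] at h1
      have := hdmin _ _ h1
      omega
  have hanceq : ∀ a n, Anc par a n → d a ≤ d n ∧ f^[d n - d a] n = a := by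
    intro a n h
    obtain ⟨k, hk⟩ := anc_iter a n h
    by_cases hkd : k ≤ d n
    · have := hdk n k hkd
      rw [hk] at this
      refine ⟨by omega, ?_⟩
      rw [this, Nat.sub_sub_self hkd, hk]
    · have hk2 : k = (k - d n) + d n := by omega
      rw [hk2, Function.iterate_add_apply, hd, hrk] at hk
      subst hk
      have : d r = 0 := Nat.le_zero.1 (hdmin r 0 rfl)
      rw [this]
      exact ⟨Nat.zero_le _, by simpa using hd n⟩
  have hcomp : ∀ a b n, Anc par a n → Anc par b n → d a ≤ d b → Anc par a b := by
    intro a b n ha hb hab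
    obtain ⟨ha1, ha2⟩ := hanceq a n ha
    obtain ⟨hb1, hb2⟩ := hanceq b n hb
    have : d n - d a = (d b - d a) + (d n - d b) := by omega
    rw [this, Function.iterate_add_apply, hb2] at ha2
    rw [← ha2]
    exact iter_anc _ _
  -- lowest common ancestors
  have hlcaex : ∀ n₁ n₂, ∃ m, Anc par m n₁ ∧ Anc par m n₂ ∧
      ∀ m', Anc par m' n₁ → Anc par m' n₂ → Anc par m' m := by
    intro n₁ n₂
    have hP : ∃ k, Anc par (f^[k] n₁) n₂ := ⟨d n₁, by rw [hd]; exact hanc n₂⟩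
    refine ⟨f^[Nat.find hP] n₁, iter_anc _ _, Nat.find_spec hP, ?_⟩
    intro m' h1 h2
    obtain ⟨k, hk⟩ := anc_iter m' n₁ h1
    have hle : Nat.find hP ≤ k := Nat.find_min' hP (by rw [hk]; exact h2)
    have : k = (k - Nat.find hP) + Nat.find hP := by omega
    rw [this, Function.iterate_add_apply] at hk
    rw [← hk]
    exact iter_anc _ _
  -- topmost bags
  have htop : ∀ v, ∃ t, v ∈ β t ∧ ∀ n, v ∈ β n → Anc par t n := by
    intro v
    have hP : ∃ k, ∃ n, v ∈ β n ∧ d n = k := by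
      obtain ⟨n, hn⟩ := hcov v
      exact ⟨d n, n, hn, rfl⟩
    obtain ⟨t, ht, htd⟩ := Nat.find_spec hP
    refine ⟨t, ht, ?_⟩
    intro n hn
    obtain ⟨m, hm1, hm2, hm3⟩ := hlcaex t n
    have hm := hlca v t n m ht hn hm1 hm2 hm3
    have h1 : d t ≤ d m := by rw [htd]; exact Nat.find_min' hP ⟨m, hm, rfl⟩
    exact Relation.ReflTransGen.trans hm2 (hcomp t m t Relation.ReflTransGen.refl hm1 h1)
  choose t ht1 ht2 using htop
  obtain ⟨w, hw, hmax⟩ := A.exists_max_image (fun v => d (t v)) hA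
  refine ⟨w, hw, t w, ht1 w, ?_⟩
  intro u hu m hum hwm
  exact hvert u m (t u) (t w) hum (ht1 u) (ht2 u m hum) (ht2 w m hwm)
    (hcomp _ _ m (ht2 u m hum) (ht2 w m hwm) (hmax u hu))

lemma simplicial_avoid {V N : Type} (β : N → Set V)
    (H : ∀ A : Finset V, A.Nonempty → ∃ w ∈ A, Simpl β A w) :
    ∀ (k : ℕ) (A : Finset V) (K : Set V), A.card = k →
      (∃ n, K ⊆ β n) → (∃ v ∈ A, v ∉ K) → ∃ v ∈ A, v ∉ K ∧ Simpl β A v := by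
  classical
  intro k
  induction k with
  | zero =>
    rintro A K hA - ⟨v, hv, -⟩
    rw [Finset.card_eq_zero] at hA
    simp [hA] at hv
  | succ k ih =>
    rintro A K hA ⟨n₀, hn₀⟩ ⟨v, hv, hvK⟩
    obtain ⟨w, hw, n, hwn, hn⟩ := H A ⟨v, hv⟩
    by_cases hwK : w ∈ K
    · by_cases hall : ∃ u ∈ A.erase w, u ∉ β n
      · obtain ⟨u, hu, huK, n', hun', hn'⟩ :=
          ih (A.erase w) (β n) (by rw [Finset.card_erase_of_mem hw, hA]; rfl) ⟨n, subset_rfl⟩ hall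
        have huA := Finset.mem_of_mem_erase hu
        refine ⟨u, huA, ?_, n', hun', ?_⟩
        · intro huK'
          exact huK (hn u huA n₀ (hn₀ huK') (hn₀ hwK))
        · intro z hz m hzm hum
          by_cases hzw : z = w
          · subst hzw
            exact (huK (hn u huA m hum hzm)).elim
          · exact hn' z (Finset.mem_erase.2 ⟨hzw, hz⟩) m hzm hum
      · push Not at hall
        have hall' : ∀ u ∈ A, u ∈ β n := by
          intro u hu
          by_cases huw : u = w
          · rw [huw]; exact hwn
          · exact hall u (Finset.mem_erase.2 ⟨huw, hu⟩)
        exact ⟨v, hv, hvK, n, hall' v hv, fun u hu _ _ _ => hall' u hu⟩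
    · exact ⟨w, hw, hwK, n, hwn, hn⟩

/-! ### The reduction -/

structure SPart {L : Type} (G : BGraph L) where
  W : Set G.V
  F : Set G.E
  a : G.V
  b : G.V

/-- State of the reduction. -/
structure St {L N : Type} (G : BGraph L) (β : N → Set G.V) (VS : Set G.V) (ES : Set G.E)
    (A : Finset G.V) (P : Finset (SPart G)) : Prop where
  dp : ∀ p ∈ P, DP G p.W p.F p.a p.b
  ne : ∀ p ∈ P, p.a ≠ p.b
  mem : ∀ p ∈ P, p.a ∈ A ∧ p.b ∈ A
  bag : ∀ p ∈ P, ∃ n, p.a ∈ β n ∧ p.b ∈ β n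
  act : ∀ p ∈ P, ∀ u ∈ p.W, u ∈ A → u = p.a ∨ u = p.b
  disjF : ∀ p ∈ P, ∀ q ∈ P, p ≠ q → ∀ e, e ∈ p.F → e ∈ q.F → False
  disjW : ∀ p ∈ P, ∀ q ∈ P, p ≠ q → ∀ u, u ∈ p.W → u ∈ q.W → u ∈ A
  covF : ∀ e, e ∈ ES ↔ ∃ p ∈ P, e ∈ p.F
  covW : ∀ u, u ∈ VS ↔ u ∈ A ∨ ∃ p ∈ P, u ∈ p.W

lemma st_two {L N : Type} {G : BGraph L} {β : N → Set G.V} {VS : Set G.V} {ES : Set G.E}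
    {A : Finset G.V} {P : Finset (SPart G)} (S : St G β VS ES A P)
    (hconn : ConnSub G VS ES) (hcut : ¬ ∃ w, CutvertexIn G VS ES w)
    {v c t : G.V} (hv : v ∈ A) (hc : c ∈ A) (ht : t ∈ A) (hvc : v ≠ c) (htc : t ≠ c)
    (hvt : v ≠ t) :
    ∃ p ∈ P, ∃ b, b ≠ c ∧ ((p.a = v ∧ p.b = b) ∨ (p.a = b ∧ p.b = v)) := by
  by_contra hno
  push Not at hno
  have hvS := (S.covW v).2 (Or.inl hv)
  have hcS := (S.covW c).2 (Or.inl hc)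
  have htS := (S.covW t).2 (Or.inl ht)
  have hpath : connIn G (VS \ {c}) (ES \ {e | (G.att e).1 = c ∨ (G.att e).2 = c}) v t := by
    by_contra h
    exact hcut ⟨c, hcS, v, t, hvS, htS, hvc, htc, hconn.2 v hvS t htS, h⟩
  have key : ∀ u, connIn G (VS \ {c}) (ES \ {e | (G.att e).1 = c ∨ (G.att e).2 = c}) v u →
      u ≠ c ∧ (u = v ∨ ∃ p ∈ P, (p.a = v ∨ p.b = v) ∧ u ∈ p.W) := by
    intro u hu
    induction hu with
    | refl => exact ⟨hvc, Or.inl rfl⟩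
    | @tail u u' _ hstep ih =>
      obtain ⟨hu1, hu2, e, ⟨heE, -⟩, he⟩ := hstep
      refine ⟨hu2.2, Or.inr ?_⟩
      obtain ⟨r, hr, her⟩ := (S.covF e).1 heE
      have hsub := (S.dp r hr).sub.1 e her
      have hur : u ∈ r.W ∧ u' ∈ r.W := by
        rcases he with he | he <;> rw [he] at hsub
        · exact hsub
        · exact hsub.symm
      have hvr : u = v → r.a = v ∨ r.b = v := by
        rintro rfl
        rcases S.act r hr u hur.1 hv with h | h
        · exact Or.inl h.symm
        · exact Or.inr h.symm
      rcases ih.2 with h | ⟨p, hp, hpv, hup⟩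
      · exact ⟨r, hr, hvr h, hur.2⟩
      · by_cases hpr : p = r
        · subst hpr
          exact ⟨p, hp, hpv, hur.2⟩
        · refine ⟨r, hr, hvr ?_, hur.2⟩
          have huA := S.disjW p hp r hr hpr u hup hur.1
          have h1 := S.act p hp u hup huA
          by_contra huv
          rcases hpv with h | h
          · exact (hno p hp u ih.1).1 h (by rcases h1 with h1 | h1 <;> simp_all)
          · exact (hno p hp u ih.1).2 (by rcases h1 with h1 | h1 <;> simp_all) h
  obtain ⟨-, h | ⟨p, hp, hpv, htp⟩⟩ := key t hpath
  · exact hvt h.symm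
  · have h1 := S.act p hp t htp ht
    rcases hpv with h | h
    · exact (hno p hp t htc).1 h (by rcases h1 with h1 | h1 <;> simp_all)
    · exact (hno p hp t htc).2 (by rcases h1 with h1 | h1 <;> simp_all) h

open Classical in
lemma st_par {L N : Type} {G : BGraph L} {β : N → Set G.V} {VS : Set G.V} {ES : Set G.E}
    {A : Finset G.V} {P : Finset (SPart G)} (S : St G β VS ES A P)
    {p q : SPart G} (hp : p ∈ P) (hq : q ∈ P) (hpq : p ≠ q)
    (hab : (q.a = p.a ∧ q.b = p.b) ∨ (q.a = p.b ∧ q.b = p.a)) :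
    St G β VS ES A (insert ⟨p.W ∪ q.W, p.F ∪ q.F, p.a, p.b⟩ ((P.erase p).erase q)) := by
  have hq' : DP G q.W q.F p.a p.b := by
    rcases hab with h | h
    · rw [← h.1, ← h.2]; exact S.dp q hq
    · rw [← h.1, ← h.2]; exact (S.dp q hq).symm
  have hqact : ∀ u ∈ q.W, u ∈ A → u = p.a ∨ u = p.b := by
    intro u hu hA
    have := S.act q hq u hu hA
    grind
  have hd := DP.par (S.dp p hp) hq' (fun u h h' => S.act p hp u h (S.disjW p hp q hq hpq u h h'))
    (S.disjF p hp q hq hpq)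
  have hmem : ∀ r, r ∈ insert (⟨p.W ∪ q.W, p.F ∪ q.F, p.a, p.b⟩ : SPart G) ((P.erase p).erase q) ↔
      r = ⟨p.W ∪ q.W, p.F ∪ q.F, p.a, p.b⟩ ∨ (r ∈ P ∧ r ≠ p ∧ r ≠ q) := by
    intro r; simp only [Finset.mem_insert, Finset.mem_erase]; tauto
  constructor
  · intro r hr
    rcases (hmem r).1 hr with rfl | ⟨h, -, -⟩
    · exact hd
    · exact S.dp r h
  · intro r hr
    rcases (hmem r).1 hr with rfl | ⟨h, -, -⟩
    · exact S.ne p hp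
    · exact S.ne r h
  · intro r hr
    rcases (hmem r).1 hr with rfl | ⟨h, -, -⟩
    · exact S.mem p hp
    · exact S.mem r h
  · intro r hr
    rcases (hmem r).1 hr with rfl | ⟨h, -, -⟩
    · exact S.bag p hp
    · exact S.bag r h
  · intro r hr
    rcases (hmem r).1 hr with rfl | ⟨h, -, -⟩
    · rintro u (hu | hu) hA
      · exact S.act p hp u hu hA
      · exact hqact u hu hA
    · exact S.act r h
  · intro r hr s hs hrs e he he'
    rcases (hmem r).1 hr with rfl | ⟨h, h1, h2⟩ <;> rcases (hmem s).1 hs with rfl | ⟨h', h1', h2'⟩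
    · exact hrs rfl
    · rcases he with he | he
      · exact S.disjF p hp s h' h1'.symm e he he'
      · exact S.disjF q hq s h' h2'.symm e he he'
    · rcases he' with he' | he'
      · exact S.disjF p hp r h h1.symm e he' he
      · exact S.disjF q hq r h h2.symm e he' he
    · exact S.disjF r h s h' hrs e he he'
  · intro r hr s hs hrs e he he'
    rcases (hmem r).1 hr with rfl | ⟨h, h1, h2⟩ <;> rcases (hmem s).1 hs with rfl | ⟨h', h1', h2'⟩
    · exact (hrs rfl).elim
    · rcases he with he | he
      · exact S.disjW p hp s h' h1'.symm e he he'
      · exact S.disjW q hq s h' h2'.symm e he he'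
    · rcases he' with he' | he'
      · exact S.disjW p hp r h h1.symm e he' he
      · exact S.disjW q hq r h h2.symm e he' he
    · exact S.disjW r h s h' hrs e he he'
  · intro e
    rw [S.covF e]
    constructor
    · rintro ⟨r, hr, her⟩
      by_cases h1 : r = p
      · subst h1; exact ⟨_, (hmem _).2 (Or.inl rfl), Or.inl her⟩
      by_cases h2 : r = q
      · subst h2; exact ⟨_, (hmem _).2 (Or.inl rfl), Or.inr her⟩
      exact ⟨r, (hmem r).2 (Or.inr ⟨hr, h1, h2⟩), her⟩
    · rintro ⟨r, hr, her⟩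
      rcases (hmem r).1 hr with rfl | ⟨h, -, -⟩
      · rcases her with h | h
        · exact ⟨p, hp, h⟩
        · exact ⟨q, hq, h⟩
      · exact ⟨r, h, her⟩
  · intro e
    rw [S.covW e]
    apply or_congr Iff.rfl
    constructor
    · rintro ⟨r, hr, her⟩
      by_cases h1 : r = p
      · subst h1; exact ⟨_, (hmem _).2 (Or.inl rfl), Or.inl her⟩
      by_cases h2 : r = q
      · subst h2; exact ⟨_, (hmem _).2 (Or.inl rfl), Or.inr her⟩
      exact ⟨r, (hmem r).2 (Or.inr ⟨hr, h1, h2⟩), her⟩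
    · rintro ⟨r, hr, her⟩
      rcases (hmem r).1 hr with rfl | ⟨h, -, -⟩
      · rcases her with h | h
        · exact ⟨p, hp, h⟩
        · exact ⟨q, hq, h⟩
      · exact ⟨r, h, her⟩

open Classical in
lemma st_ser {L N : Type} {G : BGraph L} {β : N → Set G.V} {VS : Set G.V} {ES : Set G.E}
    {A : Finset G.V} {P : Finset (SPart G)} (S : St G β VS ES A P)
    {p q : SPart G} (hp : p ∈ P) (hq : q ∈ P) {v b c : G.V} (hbc : b ≠ c)
    (hpb : (p.a = v ∧ p.b = b) ∨ (p.a = b ∧ p.b = v))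
    (hqc : (q.a = v ∧ q.b = c) ∨ (q.a = c ∧ q.b = v))
    (hbag : ∃ n, b ∈ β n ∧ c ∈ β n)
    (honly : ∀ r ∈ P, r.a = v ∨ r.b = v → r = p ∨ r = q) :
    St G β VS ES (A.erase v) (insert ⟨p.W ∪ q.W, p.F ∪ q.F, b, c⟩ ((P.erase p).erase q)) := by
  have hpne := S.ne p hp
  have hqne := S.ne q hq
  have hpm := S.mem p hp
  have hqm := S.mem q hq
  have hbv : b ≠ v := by grind
  have hcv : c ≠ v := by grind
  have hbA : b ∈ A := by grind
  have hcA : c ∈ A := by grind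
  have hpq : p ≠ q := by grind
  have hp' : DP G p.W p.F b v := by
    rcases hpb with h | h
    · rw [← h.1, ← h.2]; exact (S.dp p hp).symm
    · rw [← h.1, ← h.2]; exact (S.dp p hp)
  have hq' : DP G q.W q.F v c := by
    rcases hqc with h | h
    · rw [← h.1, ← h.2]; exact S.dp q hq
    · rw [← h.1, ← h.2]; exact (S.dp q hq).symm
  have hpact : ∀ u ∈ p.W, u ∈ A → u = b ∨ u = v := by
    intro u hu hA
    have := S.act p hp u hu hA
    grind
  have hqact : ∀ u ∈ q.W, u ∈ A → u = c ∨ u = v := by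
    intro u hu hA
    have := S.act q hq u hu hA
    grind
  have hd := DP.ser hp' hq' (fun u h h' => by
      have hA := S.disjW p hp q hq hpq u h h'
      have h1 := hpact u h hA
      have h2 := hqact u h' hA
      grind)
    (S.disjF p hp q hq hpq)
  have hmem : ∀ r, r ∈ insert (⟨p.W ∪ q.W, p.F ∪ q.F, b, c⟩ : SPart G) ((P.erase p).erase q) ↔
      r = ⟨p.W ∪ q.W, p.F ∪ q.F, b, c⟩ ∨ (r ∈ P ∧ r ≠ p ∧ r ≠ q) := by
    intro r; simp only [Finset.mem_insert, Finset.mem_erase]; tauto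
  have hnov : ∀ r ∈ P, r ≠ p → r ≠ q → r.a ≠ v ∧ r.b ≠ v ∧ (v ∈ A → v ∉ r.W) := by
    intro r hr h1 h2
    have h3 := honly r hr
    refine ⟨by grind, by grind, ?_⟩
    intro hv hvr
    have := S.act r hr v hvr hv
    grind
  constructor
  · intro r hr
    rcases (hmem r).1 hr with rfl | ⟨h, -, -⟩
    · exact hd
    · exact S.dp r h
  · intro r hr
    rcases (hmem r).1 hr with rfl | ⟨h, -, -⟩
    · exact hbc
    · exact S.ne r h
  · intro r hr
    rcases (hmem r).1 hr with rfl | ⟨h, h1, h2⟩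
    · exact ⟨Finset.mem_erase.2 ⟨hbv, hbA⟩, Finset.mem_erase.2 ⟨hcv, hcA⟩⟩
    · have := hnov r h h1 h2
      exact ⟨Finset.mem_erase.2 ⟨this.1, (S.mem r h).1⟩, Finset.mem_erase.2 ⟨this.2.1, (S.mem r h).2⟩⟩
  · intro r hr
    rcases (hmem r).1 hr with rfl | ⟨h, -, -⟩
    · exact hbag
    · exact S.bag r h
  · intro r hr
    rcases (hmem r).1 hr with rfl | ⟨h, -, -⟩
    · rintro u (hu | hu) hA <;> rw [Finset.mem_erase] at hA
      · have := hpact u hu hA.2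
        exact Or.inl (this.resolve_right hA.1)
      · have := hqact u hu hA.2
        exact Or.inr (this.resolve_right hA.1)
    · intro u hu hA
      exact S.act r h u hu (Finset.mem_of_mem_erase hA)
  · intro r hr s hs hrs e he he'
    rcases (hmem r).1 hr with rfl | ⟨h, h1, h2⟩ <;> rcases (hmem s).1 hs with rfl | ⟨h', h1', h2'⟩
    · exact hrs rfl
    · rcases he with he | he
      · exact S.disjF p hp s h' h1'.symm e he he'
      · exact S.disjF q hq s h' h2'.symm e he he'
    · rcases he' with he' | he'
      · exact S.disjF p hp r h h1.symm e he' he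
      · exact S.disjF q hq r h h2.symm e he' he
    · exact S.disjF r h s h' hrs e he he'
  · have aux : ∀ r ∈ P, r ≠ p → r ≠ q → ∀ u ∈ r.W, u ∈ A → u ∈ A.erase v := by
      intro r hr h1 h2 u hu hA
      refine Finset.mem_erase.2 ⟨?_, hA⟩
      rintro rfl
      exact (hnov r hr h1 h2).2.2 hA hu
    intro r hr s hs hrs e he he'
    rcases (hmem r).1 hr with rfl | ⟨h, h1, h2⟩ <;> rcases (hmem s).1 hs with rfl | ⟨h', h1', h2'⟩
    · exact (hrs rfl).elim
    · apply aux s h' h1' h2' e he'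
      rcases he with he | he
      · exact S.disjW p hp s h' h1'.symm e he he'
      · exact S.disjW q hq s h' h2'.symm e he he'
    · apply aux r h h1 h2 e he
      rcases he' with he' | he'
      · exact S.disjW p hp r h h1.symm e he' he
      · exact S.disjW q hq r h h2.symm e he' he
    · exact aux r h h1 h2 e he (S.disjW r h s h' hrs e he he')
  · intro e
    rw [S.covF e]
    constructor
    · rintro ⟨r, hr, her⟩
      by_cases h1 : r = p
      · subst h1; exact ⟨_, (hmem _).2 (Or.inl rfl), Or.inl her⟩
      by_cases h2 : r = q
      · subst h2; exact ⟨_, (hmem _).2 (Or.inl rfl), Or.inr her⟩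
      exact ⟨r, (hmem r).2 (Or.inr ⟨hr, h1, h2⟩), her⟩
    · rintro ⟨r, hr, her⟩
      rcases (hmem r).1 hr with rfl | ⟨h, -, -⟩
      · rcases her with h | h
        · exact ⟨p, hp, h⟩
        · exact ⟨q, hq, h⟩
      · exact ⟨r, h, her⟩
  · intro e
    rw [S.covW e]
    constructor
    · rintro (hA | ⟨r, hr, her⟩)
      · by_cases hev : e = v
        · subst hev
          exact Or.inr ⟨_, (hmem _).2 (Or.inl rfl), Or.inl hp'.sub.2.2⟩
        · exact Or.inl (Finset.mem_erase.2 ⟨hev, hA⟩)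
      right
      by_cases h1 : r = p
      · subst h1; exact ⟨_, (hmem _).2 (Or.inl rfl), Or.inl her⟩
      by_cases h2 : r = q
      · subst h2; exact ⟨_, (hmem _).2 (Or.inl rfl), Or.inr her⟩
      exact ⟨r, (hmem r).2 (Or.inr ⟨hr, h1, h2⟩), her⟩
    · rintro (hA | ⟨r, hr, her⟩)
      · exact Or.inl (Finset.mem_of_mem_erase hA)
      right
      rcases (hmem r).1 hr with rfl | ⟨h, -, -⟩
      · rcases her with h | h
        · exact ⟨p, hp, h⟩
        · exact ⟨q, hq, h⟩
      · exact ⟨r, h, her⟩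

open Classical in
lemma card_merge {α : Type} (P : Finset α) (p q s : α) (hp : p ∈ P) (hq : q ∈ P) (hpq : p ≠ q) :
    (insert s ((P.erase p).erase q)).card < P.card := by
  have h1 := Finset.card_erase_lt_of_mem hp
  have h2 := Finset.card_erase_lt_of_mem (Finset.mem_erase.2 ⟨hpq.symm, hq⟩)
  have h3 := Finset.card_insert_le s ((P.erase p).erase q)
  omega

lemma st_main {L N : Type} {G : BGraph L} {β : N → Set G.V} {VS : Set G.V} {ES : Set G.E}
    (hconn : ConnSub G VS ES) (hcut : ¬ ∃ w, CutvertexIn G VS ES w)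
    (hβ : ∀ n, (β n).Finite ∧ (β n).ncard ≤ 3)
    (H : ∀ A : Finset G.V, A.Nonempty → ∃ w ∈ A, Simpl β A w)
    {x y : G.V} (hxy : x ≠ y) (hbag : ∃ n, x ∈ β n ∧ y ∈ β n) (hES : ES.Nonempty) :
    ∀ (k : ℕ) (A : Finset G.V) (P : Finset (SPart G)), P.card = k → x ∈ A → y ∈ A →
      St G β VS ES A P → DP G VS ES x y := by
  classical
  intro k
  induction k using Nat.strong_induction_on with
  | _ k ih =>
  intro A P hk hxA hyA S
  by_cases hpar : ∃ p ∈ P, ∃ q ∈ P, p ≠ q ∧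
      ((q.a = p.a ∧ q.b = p.b) ∨ (q.a = p.b ∧ q.b = p.a))
  · obtain ⟨p, hp, q, hq, hpq, hab⟩ := hpar
    exact ih _ (by rw [← hk]; exact card_merge P p q _ hp hq hpq) A _ rfl hxA hyA
      (st_par S hp hq hpq hab)
  push Not at hpar
  by_cases hA : ∃ v ∈ A, v ∉ ({x, y} : Set G.V)
  · obtain ⟨v, hv, hvxy, n, hvn, hn⟩ := simplicial_avoid β H _ A {x, y} rfl (by
      obtain ⟨n, h1, h2⟩ := hbag
      refine ⟨n, ?_⟩
      rintro u (rfl | rfl)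
      · exact h1
      · exact h2) hA
    simp only [Set.mem_insert_iff, Set.mem_singleton_iff, not_or] at hvxy
    obtain ⟨p, hp, b, hbx, hpb⟩ := st_two S hconn hcut hv hxA hyA hvxy.1 hxy.symm hvxy.2
    have hpne := S.ne p hp
    have hpm := S.mem p hp
    have hbv : b ≠ v := by grind
    have hbA : b ∈ A := by grind
    obtain ⟨q, hq, c, hcb, hqc⟩ := st_two S hconn hcut hv hbA hxA hbv.symm hbx.symm hvxy.1
    have hqne := S.ne q hq
    have hqm := S.mem q hq
    have hcv : c ≠ v := by grind
    have hcA : c ∈ A := by grind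
    have hnb : ∀ r ∈ P, ∀ z, ((r.a = v ∧ r.b = z) ∨ (r.a = z ∧ r.b = v)) → z ∈ β n := by
      intro r hr z hz
      obtain ⟨m, h1, h2⟩ := S.bag r hr
      have hm := S.mem r hr
      rcases hz with ⟨rfl, rfl⟩ | ⟨rfl, rfl⟩
      · exact hn _ hm.2 m h2 h1
      · exact hn _ hm.1 m h1 h2
    have hbn := hnb p hp b hpb
    have hcn := hnb q hq c hqc
    have hthree : ∀ z ∈ β n, z = v ∨ z = b ∨ z = c := by
      intro z hz
      by_contra hcon
      push Not at hcon
      have hsub : (({z, v, b, c} : Finset G.V) : Set G.V) ⊆ β n := by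
        intro u hu
        simp only [Finset.coe_insert, Finset.coe_singleton, Set.mem_insert_iff,
          Set.mem_singleton_iff] at hu
        rcases hu with rfl | rfl | rfl | rfl <;> assumption
      have h4 : ({z, v, b, c} : Finset G.V).card = 4 := by
        rw [Finset.card_eq_succ]
        refine ⟨z, {v, b, c}, by simp [hcon], rfl, ?_⟩
        rw [Finset.card_eq_three]
        exact ⟨v, b, c, hbv.symm, hcv.symm, hcb.symm, rfl⟩
      have h5 := Set.ncard_le_ncard hsub (hβ n).1
      rw [Set.ncard_coe_finset, h4] at h5
      have := (hβ n).2
      omega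
    have honly : ∀ r ∈ P, r.a = v ∨ r.b = v → r = p ∨ r = q := by
      intro r hr hrv
      have hrne := S.ne r hr
      have hz : ∃ z, ((r.a = v ∧ r.b = z) ∨ (r.a = z ∧ r.b = v)) := by
        rcases hrv with h | h
        · exact ⟨r.b, Or.inl ⟨h, rfl⟩⟩
        · exact ⟨r.a, Or.inr ⟨rfl, h⟩⟩
      obtain ⟨z, hz⟩ := hz
      have h3 := hthree z (hnb r hr z hz)
      have hp1 := hpar r hr p hp
      have hq1 := hpar r hr q hq
      by_contra hcon
      push Not at hcon
      have hp2 := hp1 hcon.1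
      have hq2 := hq1 hcon.2
      grind
    have hpq : p ≠ q := by grind
    exact ih _ (by rw [← hk]; exact card_merge P p q _ hp hq hpq) (A.erase v) _ rfl
      (Finset.mem_erase.2 ⟨Ne.symm hvxy.1, hxA⟩) (Finset.mem_erase.2 ⟨Ne.symm hvxy.2, hyA⟩)
      (st_ser S hp hq hcb.symm hpb hqc ⟨n, hbn, hcn⟩ honly)
  · push Not at hA
    have hterm : ∀ p ∈ P, (p.a = x ∧ p.b = y) ∨ (p.a = y ∧ p.b = x) := by
      intro p hp
      have h1 := hA _ (S.mem p hp).1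
      have h2 := hA _ (S.mem p hp).2
      have h3 := S.ne p hp
      simp only [Set.mem_insert_iff, Set.mem_singleton_iff] at h1 h2
      grind
    obtain ⟨e, he⟩ := hES
    obtain ⟨p, hp, -⟩ := (S.covF e).1 he
    have huniq : ∀ q ∈ P, q = p := by
      intro q hq
      by_contra hqp
      have h1 := hpar p hp q hq (Ne.symm hqp)
      have h2 := hterm p hp
      have h3 := hterm q hq
      grind
    have hd : DP G p.W p.F x y := by
      rcases hterm p hp with h | h
      · rw [← h.1, ← h.2]; exact S.dp p hp
      · rw [← h.1, ← h.2]; exact (S.dp p hp).symm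
    have hW : VS = p.W := by
      ext u
      rw [S.covW u]
      constructor
      · rintro (h | ⟨q, hq, h⟩)
        · rcases hA u h with rfl | rfl
          · exact hd.sub.2.1
          · exact hd.sub.2.2
        · rw [← huniq q hq]; exact h
      · exact fun h => Or.inr ⟨p, hp, h⟩
    have hF : ES = p.F := by
      ext u
      rw [S.covF u]
      constructor
      · rintro ⟨q, hq, h⟩
        rw [← huniq q hq]; exact h
      · exact fun h => ⟨p, hp, h⟩
    rw [hW, hF]
    exact hd

lemma st_init {L N : Type} (G : BGraph L) [Finite G.V] [Finite G.E] (β : N → Set G.V)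
    (hsl : ∀ e : G.E, (G.att e).1 ≠ (G.att e).2)
    (hedge : ∀ e : G.E, ∃ n, (G.att e).1 ∈ β n ∧ (G.att e).2 ∈ β n)
    (VS : Set G.V) (ES : Set G.E) (hsub : IsSub G VS ES) :
    ∃ (A : Finset G.V) (P : Finset (SPart G)), (∀ u, u ∈ A ↔ u ∈ VS) ∧ St G β VS ES A P := by
  classical
  let mk : G.E → SPart G := fun e => ⟨{(G.att e).1, (G.att e).2}, {e}, (G.att e).1, (G.att e).2⟩
  refine ⟨(Set.toFinite VS).toFinset, (Set.toFinite ES).toFinset.image mk, by simp, ?_⟩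
  have hm : ∀ p, p ∈ (Set.toFinite ES).toFinset.image mk ↔ ∃ e ∈ ES, mk e = p := by simp
  have hW : ∀ e ∈ ES, ∀ u ∈ (mk e).W, u ∈ VS := by
    rintro e he u (rfl | rfl)
    · exact (hsub e he).1
    · exact (hsub e he).2
  constructor
  · intro p hp
    obtain ⟨e, he, rfl⟩ := (hm p).1 hp
    exact DP.edge e _ _ (hsl e) (Or.inl rfl)
  · intro p hp
    obtain ⟨e, he, rfl⟩ := (hm p).1 hp
    exact hsl e
  · intro p hp
    obtain ⟨e, he, rfl⟩ := (hm p).1 hp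
    simpa using hsub e he
  · intro p hp
    obtain ⟨e, he, rfl⟩ := (hm p).1 hp
    exact hedge e
  · intro p hp
    obtain ⟨e, he, rfl⟩ := (hm p).1 hp
    rintro u hu -
    exact hu
  · intro p hp q hq hpq f hf hf'
    obtain ⟨e, he, rfl⟩ := (hm p).1 hp
    obtain ⟨e', he', rfl⟩ := (hm q).1 hq
    have h1 : f = e := hf
    have h2 : f = e' := hf'
    exact hpq (by rw [← h1, ← h2])
  · intro p hp q hq hpq u hu hu'
    obtain ⟨e, he, rfl⟩ := (hm p).1 hp
    simpa using hW e he u hu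
  · intro e
    constructor
    · intro he
      exact ⟨mk e, (hm _).2 ⟨e, he, rfl⟩, rfl⟩
    · rintro ⟨p, hp, hep⟩
      obtain ⟨e', he', rfl⟩ := (hm p).1 hp
      have : e = e' := hep
      rw [this]; exact he'
  · intro u
    constructor
    · intro hu; left; simpa using hu
    · rintro (hu | ⟨p, hp, hup⟩)
      · simpa using hu
      · obtain ⟨e', he', rfl⟩ := (hm p).1 hp
        exact hW e' he' u hup

/-- in a connected graph of tree-width at most 2 without
self-loops, for every nontrivial block `B` and every vertex `x` of `B` there
is a vertex `y` of `B`, joined to `x` by an edge of `B`, such that `B` with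
1-source `x` and 2-source `y` is a ∘-atomic disoriented series-parallel
graph. -/
theorem block_is_atomic_dsp {L : Type} (G : BGraph L) [Finite G.V] [Finite G.E]
    (hsl : ∀ e : G.E, (G.att e).1 ≠ (G.att e).2)
    (hconn : ∀ u v : G.V, connIn G Set.univ Set.univ u v)
    (htw : TWle2 G)
    (VS : Set G.V) (ES : Set G.E) (hblk : IsBlock G VS ES)
    (hnt : ∃ a ∈ VS, ∃ b ∈ VS, a ≠ b)
    (x : G.V) (hx : x ∈ VS) :
    ∃ y : G.V, ∃ hy : y ∈ VS, y ≠ x ∧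
      (∃ e ∈ ES, G.att e = (x, y) ∨ G.att e = (y, x)) ∧
      IsDSP (subG2 G VS ES hblk.1 x y hx hy) ∧
      (∀ H₁ H₂ : G2 L, IsDSP H₁ → IsDSP H₂ →
        ¬ Nonempty (GIso (subG2 G VS ES hblk.1 x y hx hy) (serG H₁ H₂))) := by
  classical
  obtain ⟨N, par, β, hroot, hedge, hcov, hvert, hlca, hβ⟩ := htw
  have hb := hblk
  obtain ⟨hsub, hcon, hcut, -⟩ := hb
  have hz : ∃ z ∈ VS, z ≠ x := by
    obtain ⟨a, ha, b, hb, hab⟩ := hnt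
    by_cases h : a = x
    · exact ⟨b, hb, fun h' => hab (h.trans h'.symm)⟩
    · exact ⟨a, ha, h⟩
  obtain ⟨z, hz, hzx⟩ := hz
  have hadj : ∃ y, adjIn G VS ES x y := by
    rcases Relation.ReflTransGen.cases_head (hcon.2 x hx z hz) with h | ⟨y, h, -⟩
    · exact (hzx h.symm).elim
    · exact ⟨y, h⟩
  obtain ⟨y, -, hy, e, he, hatt⟩ := hadj
  have hyx : y ≠ x := by
    have := hsl e
    rcases hatt with h | h <;> rw [h] at this
    · exact this.symm
    · exact this
  have hbag : ∃ n, x ∈ β n ∧ y ∈ β n := by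
    obtain ⟨n, h1, h2⟩ := hedge e
    rcases hatt with h | h <;> rw [h] at h1 h2
    · exact ⟨n, h1, h2⟩
    · exact ⟨n, h2, h1⟩
  obtain ⟨A, P, hA, S⟩ := st_init G β hsl hedge VS ES hsub
  have hd : DP G VS ES x y := st_main hcon hcut hβ
    (tree_simplicial par β hroot hcov hvert hlca) hyx.symm hbag ⟨e, he⟩ _ A P rfl
    ((hA x).2 hx) ((hA y).2 hy) S
  refine ⟨y, hy, hyx, ⟨e, he, hatt⟩, hd.sound _ _ _, ?_⟩
  rintro H₁ H₂ h1 h2 ⟨i⟩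
  let e' : (subG2 G VS ES hblk.1 x y hx hy).E := ⟨e, he⟩
  have hno := ser_no_edge h1 h2 (i.eEquiv e')
  rw [i.att_comm e', ← i.s1_comm, ← i.s2_comm] at hno
  rcases hatt with h | h
  · apply hno.1
    apply Prod.ext <;> apply congrArg i.vEquiv <;> apply Subtype.ext
    · exact congrArg Prod.fst h
    · exact congrArg Prod.snd h
  · apply hno.2
    apply Prod.ext <;> apply congrArg i.vEquiv <;> apply Subtype.ext
    · exact congrArg Prod.fst h
    · exact congrArg Prod.snd h
end
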